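/- arXiv:1510.01605 — 4 statements merged into one kernel-verified Lean document; each statement's English description precedes it below -/
import Mathlib

section
/- Let k, D ≥ 1, let (Z,S) be an aperiodic zero-dimensional ℤ^k-system, and let π: X → Z be a factor map from a ℤ^k-system (X,T) with compatible metric d and mdim(X) < D/2. Then for every continuous map f: X → [0,1]^D and every δ > 0 there exists a continuous map g: X → [0,1]^D such that |f(x) − g(x)| < δ for all x ∈ X, and the map (I_g, π): X → ([0,1]^D)^{ℤ^k} × Z is a δ-embedding with respect to d, i.e. for every point p of the target, the preimage (I_g,π)^{−1}(p) has d-diameter < δ. -/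
/-!
The map `g` is constructed tile by tile along a dynamical tiling of `ℤ^k` read off from `Z`.

Fix `ε ≤ δ` such that `f` varies little on sets of diameter `< ε`. Since `mdim X < D / 2`, for some
`N` there is an `ε`-embedding `φ` of `X`, for the metric `d_[N]`, into a complex of dimension
`w < D * N ^ k / 2` (`exists_block_embedding`). There is also a crude `ε`-embedding `ψ` for `d`
into some `ℝ^q` (`exists_embedding_complex`).

Since `Z` is free and zero-dimensional, it has clopen marker sets whose return times are as sparse
as desired (`exists_marker`). The Voronoi cells of the visit times tile `ℤ^k` in a way that depends
on `z ∈ Z` equivariantly and in a locally constant manner (`exists_voronoi_tiling`). Being convex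
and large, each cell `W` has negligible boundary (`voronoi_core`), so it is filled by translates of
`[N]` up to a small remainder (`exists_cube_packing`). Recording an orbit segment along `W` by `φ` on
the cubes and by `ψ` on the remainder therefore takes fewer than `W.card * D / 2` parameters. By
general position, the segment `(f (T^n x))_{n ∈ W}`, a point of a space of dimension `W.card * D`,
can be perturbed to a continuous function of `x` that separates points differing by `ε` somewhere
on `W` (`exists_generic_map`, `exists_tile_map`). General position comes from a Hausdorff dimension
count (`dense_good_perturbation`).

The perturbed segments on all tiles fit together to one function on `X` because the tiling is
locally constant and equivariant (`exists_glued_map`). If `π x = π y`, the points `x` and `y` have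
the same tiling, and equality of the names of `x` and `y` on the tile containing `0` gives
`d x y < ε`. A final affine contraction brings the values back into the unit cube.
-/


open Set Filter
open scoped NNReal ENNReal Topology

/-- A continuous action of `ℤ^k` on a topological space. -/
structure IsZkAction {k : ℕ} {X : Type*} [TopologicalSpace X]
    (T : (Fin k → ℤ) → X → X) : Prop where
  cont : ∀ n, Continuous (T n)
  map_zero : ∀ x, T 0 x = x
  map_add : ∀ m n x, T (m + n) x = T m (T n x)

/-- The marker property for a `ℤ^k`-action. -/
def MarkerProperty {k : ℕ} {X : Type*} [TopologicalSpace X]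
    (T : (Fin k → ℤ) → X → X) : Prop :=
  ∀ F : Finset (Fin k → ℤ), ∃ U : Set X, IsOpen U ∧
    (⋃ n : Fin k → ℤ, T n '' U) = Set.univ ∧
    ∀ n ∈ F, n ≠ 0 → U ∩ T n '' U = ∅

/-- `f` is an `ε`-embedding with respect to the (pseudo-)distance `ρ`:
every fiber of `f` has `ρ`-diameter `< ε`. -/
def IsEpsEmbedding {X Y : Type*} [TopologicalSpace X] [TopologicalSpace Y]
    (ρ : X → X → ℝ) (ε : ℝ) (f : X → Y) : Prop :=
  Continuous f ∧ ∀ x y, f x = f y → ρ x y < ε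

/-- `widim_ε(X, ρ)`: the least `n` such that there is an `ε`-embedding of `X`
into a finite simplicial complex of dimension at most `n`. -/
noncomputable def widim (X : Type*) [TopologicalSpace X] (ρ : X → X → ℝ) (ε : ℝ) : ℕ :=
  sInf {n : ℕ | ∃ (m : ℕ) (P : Geometry.SimplicialComplex ℝ (EuclideanSpace ℝ (Fin m))),
    P.faces.Finite ∧ (∀ s ∈ P.faces, s.card ≤ n + 1) ∧
    ∃ f : X → P.space, IsEpsEmbedding ρ ε f}

/-- The distance `ρ_{[N]}(x,y) = sup_{a ∈ {0,…,N-1}^k} ρ(T^a x, T^a y)`. -/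
noncomputable def blockRho {k : ℕ} {X : Type*} (T : (Fin k → ℤ) → X → X)
    (ρ : X → X → ℝ) (N : ℕ) (x y : X) : ℝ :=
  ⨆ a : Fin k → Fin N, ρ (T (fun i => (a i : ℤ)) x) (T (fun i => (a i : ℤ)) y)

/-- Mean dimension of a `ℤ^k`-system:
`mdim(X) = lim_{ε→0} lim_{N→∞} widim_ε(X, d_{[N]})/N^k`, where the limit in `N`
equals the infimum (subadditivity) and the limit in `ε` equals the supremum
(monotonicity). -/
noncomputable def mdim {k : ℕ} (X : Type*) [MetricSpace X]
    (T : (Fin k → ℤ) → X → X) : ℝ≥0∞ :=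
  ⨆ (ε : ℝ) (_ : 0 < ε), ⨅ (N : ℕ) (_ : 1 ≤ N),
    (widim X (blockRho T dist N) ε : ℝ≥0∞) / (N : ℝ≥0∞) ^ k

namespace ZkEmb

/-! ### General position -/

open scoped ContDiff Manifold in
/-- A map `G` that oscillates by less than `η` on the fibers of `φ` is `η`-close to a `C¹` function
of `φ`: locally on the target of `φ` a constant works, and a partition of unity glues these
constants. -/
lemma exists_smooth_approx {X E F : Type*} [TopologicalSpace X] [CompactSpace X]
    [NormedAddCommGroup E] [NormedSpace ℝ E] [FiniteDimensional ℝ E]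
    [NormedAddCommGroup F] [NormedSpace ℝ F]
    {φ : X → E} (hφ : Continuous φ) {G : X → F} (hG : Continuous G) {η : ℝ}
    (h : ∀ x y, φ x = φ y → dist (G x) (G y) < η) :
    ∃ u : E → F, ContDiff ℝ 1 u ∧ ∀ x, dist (u (φ x)) (G x) < η := by
  obtain ⟨g, hg⟩ := exists_contMDiffMap_forall_mem_convex_of_local_const (n := ⊤)
    (I := 𝓘(ℝ, E)) (M := E) (F := F)
    (t := fun p => {c : F | ∀ y, φ y = p → dist c (G y) < η})
    (by
      intro p
      have : {c : F | ∀ y, φ y = p → dist c (G y) < η} =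
          ⋂ (y : X) (_ : φ y = p), Metric.ball (G y) η := by
        ext c; simp [Metric.mem_ball]
      rw [this]
      exact convex_iInter fun y => convex_iInter fun _ => convex_ball _ _)
    (by
      intro p
      by_cases hp : ∃ x, φ x = p
      · obtain ⟨x, rfl⟩ := hp
        refine ⟨G x, ?_⟩
        have := hφ.isClosedMap.eventually_nhds_fiber (p := fun y => dist (G x) (G y) < η) (φ x)
          (by
            intro y hy
            have hlt := h x y (by simpa using hy.symm)
            exact (continuous_const.dist hG).continuousAt.eventually_lt_const hlt)
        filter_upwards [this] with q hq y hy
        exact hq y (by simpa using hy)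
      · refine ⟨0, ?_⟩
        have := hφ.isClosedMap.eventually_nhds_fiber (p := fun _ => False) p
          (by intro y hy; exact absurd ⟨y, by simpa using hy⟩ hp)
        filter_upwards [this] with q hq y hy
        exact (hq y (by simpa using hy)).elim)
  refine ⟨g, ?_, fun x => hg _ x rfl⟩
  exact (contMDiff_iff_contDiff.1 g.contMDiff).of_le (by exact_mod_cast le_top)

/-- General position for linear perturbations of a `C¹` map `u` on a finite union of parametrized
pieces `a i`: if twice the dimension of the parameter space `V` is less than that of `F`, then for a
dense set of linear maps `A`, the map `u + A` is injective on the union of the pieces.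

A bad `A` satisfies `u p + A p = u p' + A p'` with `p l₀ ≠ p' l₀` for some coordinate `l₀`. This
equation determines the column `A l₀` from the other columns and the parameters of `p` and `p'`, so
the bad set is a finite union of locally Lipschitz images of sets of dimension at most
`2 * dim V + (card M - 1) * dim F < card M * dim F`; a set of smaller Hausdorff dimension than the
ambient space has dense complement. -/
lemma dense_good_perturbation {M V F ι : Type*} [Fintype M] [DecidableEq M] [Finite ι]
    [NormedAddCommGroup V] [NormedSpace ℝ V] [FiniteDimensional ℝ V]
    [NormedAddCommGroup F] [NormedSpace ℝ F] [FiniteDimensional ℝ F]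
    (a : ι → V → M → ℝ) (ha : ∀ i, ContDiff ℝ 1 (a i))
    (u : (M → ℝ) → F) (hu : ContDiff ℝ 1 u)
    (hdim : 2 * Module.finrank ℝ V < Module.finrank ℝ F) :
    Dense {A : M → F | ∀ i j v w, u (a i v) + ∑ l, a i v l • A l =
      u (a j w) + ∑ l, a j w l • A l → a i v = a j w} := by
  classical
  rcases isEmpty_or_nonempty M with hE | hN
  · convert dense_univ
    rename_i A
    exact eq_univ_of_forall fun A i j v w _ => Subsingleton.elim _ _
  -- `Dm l₀` parametrizes the bad maps `A` whose witnesses differ in the coordinate `l₀`, and `Ψ`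
  -- recovers `A` by solving for its column at `l₀`.
  let Dm (l₀ : M) := V × V × ({l // l ≠ l₀} → F)
  let Ψ (i j : ι) (l₀ : M) : Dm l₀ → M → F := fun q l =>
    if h : l = l₀ then
      (-(a i q.1 l₀ - a j q.2.1 l₀)⁻¹) • (u (a i q.1) - u (a j q.2.1) +
        ∑ l : {l // l ≠ l₀}, (a i q.1 l - a j q.2.1 l) • q.2.2 l)
    else q.2.2 ⟨l, h⟩
  let s (i j : ι) (l₀ : M) : Set (Dm l₀) := {q | a i q.1 l₀ - a j q.2.1 l₀ ≠ 0}
  let bad : Set (M → F) := ⋃ (i : ι) (j : ι) (l₀ : M), Ψ i j l₀ '' s i j l₀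
  have hbad : dimH bad < Module.finrank ℝ (M → F) := by
    have hM : ∀ i j l₀, dimH (Ψ i j l₀ '' s i j l₀) ≤
        ((Module.finrank ℝ (M → F) - 1 : ℕ) : ℝ≥0∞) := by
      intro i j l₀
      have h1 : dimH (Ψ i j l₀ '' s i j l₀) ≤ dimH (s i j l₀) := by
        apply dimH_image_le_of_locally_lipschitzOn
        intro q hq
        have hcd : ContDiffAt ℝ 1 (Ψ i j l₀) q := by
          rw [contDiffAt_pi]
          intro l
          have e1 : ∀ m, ContDiffAt ℝ 1 (fun q : Dm l₀ => a i q.1 m) q := fun m =>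
            ((contDiff_pi.1 (ha i) m).comp contDiff_fst).contDiffAt
          have e2 : ∀ m, ContDiffAt ℝ 1 (fun q : Dm l₀ => a j q.2.1 m) q := fun m =>
            ((contDiff_pi.1 (ha j) m).comp (contDiff_fst.comp contDiff_snd)).contDiffAt
          have e3 : ∀ m, ContDiffAt ℝ 1 (fun q : Dm l₀ => q.2.2 m) q := fun m =>
            ((contDiff_apply ℝ F m).comp (contDiff_snd.comp contDiff_snd)).contDiffAt
          have e4 : ContDiffAt ℝ 1 (fun q : Dm l₀ => u (a i q.1)) q :=
            (hu.comp ((ha i).comp contDiff_fst)).contDiffAt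
          have e5 : ContDiffAt ℝ 1 (fun q : Dm l₀ => u (a j q.2.1)) q :=
            (hu.comp ((ha j).comp (contDiff_fst.comp contDiff_snd))).contDiffAt
          by_cases h : l = l₀
          · simp only [Ψ, h, dite_true]
            refine ContDiffAt.smul (((e1 _).sub (e2 _)).inv hq).neg ((e4.sub e5).add ?_)
            exact ContDiffAt.sum fun m _ => ((e1 _).sub (e2 _)).smul (e3 m)
          · simp only [Ψ, h, dite_false]
            exact e3 _
        obtain ⟨K, t, ht, hK⟩ := hcd.exists_lipschitzOnWith
        exact ⟨K, t, mem_nhdsWithin_of_mem_nhds ht, hK⟩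
      refine h1.trans ((dimH_mono (subset_univ _)).trans ?_)
      rw [Real.dimH_univ_eq_finrank (Dm l₀)]
      have hc : Fintype.card {l // l ≠ l₀} + 1 = Fintype.card M := by
        have : 0 < Fintype.card M := Fintype.card_pos_iff.2 ⟨l₀⟩
        have h2 : Fintype.card {l // l ≠ l₀} = Fintype.card M - 1 := by
          rw [Fintype.card_subtype_compl]; simp
        omega
      have : Module.finrank ℝ (Dm l₀) + 1 ≤ Module.finrank ℝ (M → F) := by
        simp only [Dm, Module.finrank_prod, Module.finrank_pi_fintype, Finset.sum_const,
          Finset.card_univ, ← hc, smul_eq_mul, add_mul, one_mul]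
        omega
      exact_mod_cast (by omega : Module.finrank ℝ (Dm l₀) ≤ Module.finrank ℝ (M → F) - 1)
    · have hpos : 0 < Module.finrank ℝ (M → F) := by
        simp only [Module.finrank_pi_fintype, Finset.sum_const, Finset.card_univ, smul_eq_mul]
        exact Nat.mul_pos Fintype.card_pos (by omega)
      calc dimH bad ≤ ((Module.finrank ℝ (M → F) - 1 : ℕ) : ℝ≥0∞) := by
            simp only [bad, dimH_iUnion]
            exact iSup_le fun i => iSup_le fun j => iSup_le fun l => hM i j l
        _ < _ := by exact_mod_cast Nat.sub_lt hpos one_pos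
  refine (dense_compl_of_dimH_lt_finrank hbad).mono ?_
  intro A hA i j v w heq
  by_contra hne
  obtain ⟨l₀, hl₀⟩ := Function.ne_iff.1 hne
  apply hA
  simp only [bad, mem_iUnion]
  have hd : a i v l₀ - a j w l₀ ≠ 0 := sub_ne_zero.2 hl₀
  refine ⟨i, j, l₀, ⟨v, w, fun l => A l⟩, hd, ?_⟩
  funext l
  by_cases h : l = l₀
  · subst h
    simp only [Ψ, dite_true]
    have hsum : u (a i v) - u (a j w) + ∑ m : {m // m ≠ l}, (a i v m - a j w m) • A m =
        -((a i v l - a j w l) • A l) := by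
      have h3 : ∑ m, (a i v m - a j w m) • A m =
          (a i v l - a j w l) • A l + ∑ m : {m // m ≠ l}, (a i v m - a j w m) • A m := by
        rw [Fintype.sum_eq_add_sum_subtype_ne _ l]
      have h4 : u (a i v) - u (a j w) + ∑ m, (a i v m - a j w m) • A m = 0 := by
        simp only [sub_smul, Finset.sum_sub_distrib]
        rw [← sub_eq_zero] at heq
        rw [← heq]; abel
      rw [h3] at h4
      rw [eq_neg_iff_add_eq_zero, ← h4]; abel
    rw [hsum, smul_neg, neg_smul, neg_neg, smul_smul, inv_mul_cancel₀ hd, one_smul]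
  · simp only [Ψ, h, dite_false]

/-- A map `G` with small oscillation on the fibers of `φ` can be perturbed to a map that separates
everything `φ` separates, provided the image of `φ` has small dimension compared with the target. -/
lemma exists_generic_map {X M V F ι : Type*} [TopologicalSpace X] [CompactSpace X]
    [Fintype M] [Finite ι]
    [NormedAddCommGroup V] [NormedSpace ℝ V] [FiniteDimensional ℝ V]
    [NormedAddCommGroup F] [NormedSpace ℝ F] [FiniteDimensional ℝ F]
    (a : ι → V → M → ℝ) (ha : ∀ i, ContDiff ℝ 1 (a i))
    (hdim : 2 * Module.finrank ℝ V < Module.finrank ℝ F)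
    {φ : X → M → ℝ} (hφ : Continuous φ) (hcov : ∀ x, ∃ i v, φ x = a i v)
    {G : X → F} (hG : Continuous G) {η : ℝ} (hη : 0 < η)
    (h : ∀ x y, φ x = φ y → dist (G x) (G y) < η) :
    ∃ G' : X → F, Continuous G' ∧ (∀ x, dist (G' x) (G x) < 2 * η) ∧
      ∀ x y, G' x = G' y → φ x = φ y := by
  classical
  obtain ⟨u, hu, huG⟩ := exists_smooth_approx hφ hG h
  obtain ⟨R, hR⟩ := (isCompact_range hφ).isBounded.exists_norm_le
  have hR' : ∀ x l, |φ x l| ≤ |R| := fun x l =>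
    (norm_le_pi_norm (φ x) l).trans ((hR _ ⟨x, rfl⟩).trans (le_abs_self R))
  set C : ℝ := Fintype.card M * (|R| + 1) + 1 with hC
  have hC0 : 0 < C := by positivity
  obtain ⟨A, hA, hAs⟩ := (dense_good_perturbation a ha u hu hdim).exists_dist_lt 0
    (div_pos hη hC0)
  rw [dist_zero_left] at hAs
  refine ⟨fun x => u (φ x) + ∑ l, φ x l • A l, ?_, ?_, ?_⟩
  · refine (hu.continuous.comp hφ).add (continuous_finsetSum _ fun l _ => ?_)
    exact ((continuous_apply l).comp hφ).smul continuous_const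
  · intro x
    have h1 : ‖∑ l, φ x l • A l‖ < η := by
      calc ‖∑ l, φ x l • A l‖ ≤ ∑ l : M, (|R| + 1) * ‖A‖ := by
            refine norm_sum_le_of_le _ fun l _ => ?_
            rw [norm_smul]
            have := hR' x l
            exact mul_le_mul (by rw [Real.norm_eq_abs]; linarith) (norm_le_pi_norm A l)
              (norm_nonneg _) (by positivity)
        _ = (Fintype.card M * (|R| + 1)) * ‖A‖ := by simp [mul_assoc]
        _ ≤ C * ‖A‖ := by gcongr; linarith
        _ < C * (η / C) := by gcongr
        _ = η := by field_simp
    have h2 := huG x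
    rw [dist_eq_norm] at h2 ⊢
    calc _ = ‖(u (φ x) - G x) + ∑ l, φ x l • A l‖ := by rw [add_sub_right_comm]
      _ ≤ _ := norm_add_le _ _
      _ < 2 * η := by linarith
  · intro x y hxy
    obtain ⟨i, v, hi⟩ := hcov x
    obtain ⟨j, w, hj⟩ := hcov y
    simp only [hi, hj] at hxy ⊢
    exact hA i j v w hxy

/-! ### Embeddings into complexes and mean dimension -/

/-- A simplex with at most `n + 1` vertices is covered by one affine chart with `n` parameters. -/
lemma exists_face_chart {E : Type*} [NormedAddCommGroup E] [NormedSpace ℝ E]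
    [FiniteDimensional ℝ E] (s : Finset E) (n : ℕ) (hs : s.card ≤ n + 1) :
    ∃ a : (Fin n → ℝ) → E, ContDiff ℝ 1 a ∧ convexHull ℝ (s : Set E) ⊆ range a := by
  classical
  rcases s.eq_empty_or_nonempty with rfl | hne
  · exact ⟨fun _ => 0, contDiff_const, by simp⟩
  obtain ⟨y₀, hy₀⟩ := hne
  let S : Submodule ℝ E := vectorSpan ℝ (s : Set E)
  have hS : Module.finrank ℝ S ≤ n := by
    obtain ⟨m, hm⟩ : ∃ m, s.card = m + 1 :=
      ⟨s.card - 1, by have := Finset.card_pos.2 ⟨y₀, hy₀⟩; omega⟩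
    have := finrank_vectorSpan_image_finset_le ℝ (id : E → E) s hm
    rw [Finset.image_id] at this
    exact this.trans (by omega)
  let b := Module.finBasis ℝ S
  let L : (Fin n → ℝ) →ₗ[ℝ] E :=
    S.subtype ∘ₗ b.equivFun.symm.toLinearMap ∘ₗ LinearMap.funLeft ℝ ℝ (Fin.castLE hS)
  have hL : ∀ w ∈ S, ∃ v, L v = w := by
    intro w hw
    obtain ⟨v, hv⟩ := LinearMap.funLeft_surjective_of_injective ℝ ℝ _ (Fin.castLE_injective hS)
      (b.equivFun ⟨w, hw⟩)
    exact ⟨v, by simp [L, hv]⟩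
  refine ⟨fun v => y₀ + L v, contDiff_const.add (LinearMap.toContinuousLinearMap L).contDiff, ?_⟩
  intro x hx
  have hx' : x ∈ affineSpan ℝ (s : Set E) := convexHull_subset_affineSpan _ hx
  have : x -ᵥ y₀ ∈ S := by
    change x -ᵥ y₀ ∈ vectorSpan ℝ (s : Set E)
    rw [← direction_affineSpan]
    exact AffineSubspace.vsub_mem_direction hx' (subset_affineSpan _ _ hy₀)
  obtain ⟨v, hv⟩ := hL _ this
  exact ⟨v, by simp [hv]⟩

/-- A compact metric space has an `r`-embedding into a finite simplicial complex, given by a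
partition of unity subordinate to a finite cover by `r / 2`-balls. -/
lemma exists_embedding_complex {X : Type*} [MetricSpace X] [CompactSpace X] {r : ℝ} (hr : 0 < r) :
    ∃ (m : ℕ) (P : Geometry.SimplicialComplex ℝ (EuclideanSpace ℝ (Fin m))),
      P.faces.Finite ∧ ∃ f : X → P.space, Continuous f ∧ ∀ x y, f x = f y → dist x y < r := by
  classical
  obtain ⟨t, -, htf, ht⟩ := finite_cover_balls_of_compact (isCompact_univ (X := X)) (half_pos hr)
  obtain ⟨m, c, hc⟩ : ∃ (m : ℕ) (c : Fin m → X), ∀ x, ∃ i, dist x (c i) < r / 2 := by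
    have := htf.fintype
    let e := Fintype.equivFin t
    refine ⟨Fintype.card t, fun i => (e.symm i : X), fun x => ?_⟩
    obtain ⟨y, hy, hxy⟩ := mem_iUnion₂.1 (ht (mem_univ x))
    exact ⟨e ⟨y, hy⟩, by simpa using hxy⟩
  let b : Fin m → (EuclideanSpace ℝ (Fin m)) := fun i => EuclideanSpace.single i 1
  let Sb : Finset (EuclideanSpace ℝ (Fin m)) := Finset.univ.image b
  have hb : LinearIndependent ℝ b := by
    have := (EuclideanSpace.basisFun (Fin m) ℝ).toBasis.linearIndependent
    have hbb : (⇑(EuclideanSpace.basisFun (Fin m) ℝ).toBasis) = b := by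
      funext i; simp [b]
    rwa [hbb] at this
  have hind : AffineIndependent ℝ ((↑) : Sb → (EuclideanSpace ℝ (Fin m))) := by
    have := hb.affineIndependent.range
    have hset : (Sb : Set (EuclideanSpace ℝ (Fin m))) = range b := by simp [Sb]
    rw [← hset] at this
    exact this
  let P : Geometry.SimplicialComplex ℝ (EuclideanSpace ℝ (Fin m)) :=
    Geometry.SimplicialComplex.ofErase {s : Finset (EuclideanSpace ℝ (Fin m)) | s ⊆ Sb}
      (fun s hs => hind.mono hs)
      (fun s u hu hs => hu.trans hs)
      (fun s hs u hu => by
        exact (hind.convexHull_inter hs hu).symm.subset)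
  have hfin : P.faces.Finite := by
    refine (Finset.finite_toSet Sb.powerset).subset ?_
    intro s hs
    simpa using hs.1
  let ψ : Fin m → X → ℝ := fun i x => max 0 (r / 2 - dist x (c i))
  have hψc : ∀ i, Continuous (ψ i) := fun i => by fun_prop
  have hψ0 : ∀ i x, 0 ≤ ψ i x := fun i x => le_max_left _ _
  have hψpos : ∀ i x, 0 < ψ i x → dist x (c i) < r / 2 := by
    intro i x hx
    rcases lt_max_iff.1 hx with h | h
    · exact absurd h (lt_irrefl _)
    · linarith
  have hsum : ∀ x, 0 < ∑ i, ψ i x := by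
    intro x
    obtain ⟨i, hi⟩ := hc x
    exact Finset.sum_pos' (fun j _ => hψ0 j x) ⟨i, Finset.mem_univ _, lt_max_of_lt_right (by linarith)⟩
  let g : X → (EuclideanSpace ℝ (Fin m)) := fun x => ∑ i, (ψ i x / ∑ j, ψ j x) • b i
  have hg : ∀ x, g x ∈ P.space := by
    intro x
    have hfac : Sb ∈ P.faces := by
      refine ⟨Finset.Subset.refl Sb, ?_⟩
      obtain ⟨i, -⟩ := hc x
      intro h
      have : b i ∈ (∅ : Finset (EuclideanSpace ℝ (Fin m))) := by
        rw [← show Sb = ∅ from h]; simp [Sb]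
      simp at this
    refine P.convexHull_subset_space hfac ?_
    refine (convex_convexHull ℝ _).sum_mem (fun i _ => div_nonneg (hψ0 i x) (hsum x).le) ?_ ?_
    · rw [← Finset.sum_div, div_self (hsum x).ne']
    · intro i _
      exact subset_convexHull ℝ _ (by simp [Sb])
  refine ⟨m, P, hfin, fun x => ⟨g x, hg x⟩, ?_, ?_⟩
  · refine Continuous.subtype_mk ?_ _
    refine continuous_finsetSum _ fun i _ => ?_
    refine Continuous.smul (f := fun x => ψ i x / ∑ j, ψ j x) (g := fun _ => b i) ?_ continuous_const
    exact (hψc i).div (continuous_finsetSum _ fun j _ => hψc j) fun x => (hsum x).ne'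
  · intro x y hxy
    have hxy' : g x = g y := congrArg Subtype.val hxy
    have hcoord : ∀ z i, g z i = ψ i z / ∑ j, ψ j z := by
      intro z i
      simp [g, b, Pi.single_apply]
    obtain ⟨i, hi⟩ := hc x
    have h1 : 0 < g x i := by
      rw [hcoord]; exact div_pos (lt_max_of_lt_right (by linarith)) (hsum x)
    rw [hxy', hcoord] at h1
    have h2 : 0 < ψ i y := by
      rcases (hψ0 i y).eq_or_lt with h | h
      · rw [← h] at h1; simp at h1
      · exact h
    have := hψpos i y h2
    have := dist_triangle_right x y (c i)
    linarith

lemma le_blockRho {k : ℕ} {X : Type*} [MetricSpace X] (T : (Fin k → ℤ) → X → X) (N : ℕ)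
    (x y : X) (a : Fin k → Fin N) :
    dist (T (fun i => (a i : ℤ)) x) (T (fun i => (a i : ℤ)) y) ≤ blockRho T dist N x y :=
  le_ciSup (f := fun a : Fin k → Fin N =>
    dist (T (fun i => (a i : ℤ)) x) (T (fun i => (a i : ℤ)) y)) (Set.finite_range _).bddAbove a

/-- The infimum defining `widim` is over a nonempty set, hence attained: an embedding with a
sufficiently small constant in the original metric is an `ε`-embedding for the block metric. -/
lemma widim_spec {k : ℕ} {X : Type*} [MetricSpace X] [CompactSpace X]
    {T : (Fin k → ℤ) → X → X} (hT : IsZkAction T) {N : ℕ} (hN : 1 ≤ N) {ε : ℝ} (hε : 0 < ε) :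
    ∃ (m : ℕ) (P : Geometry.SimplicialComplex ℝ (EuclideanSpace ℝ (Fin m))),
    P.faces.Finite ∧ (∀ s ∈ P.faces, s.card ≤ widim X (blockRho T dist N) ε + 1) ∧
    ∃ f : X → P.space, IsEpsEmbedding (blockRho T dist N) ε f := by
  refine Nat.sInf_mem (s := {n : ℕ | ∃ (m : ℕ) (P : Geometry.SimplicialComplex ℝ
    (EuclideanSpace ℝ (Fin m))), P.faces.Finite ∧ (∀ s ∈ P.faces, s.card ≤ n + 1) ∧
    ∃ f : X → P.space, IsEpsEmbedding (blockRho T dist N) ε f}) ?_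
  have hunif : ∃ r > 0, ∀ x y : X, dist x y < r → ∀ a : Fin k → Fin N,
      dist (T (fun i => (a i : ℤ)) x) (T (fun i => (a i : ℤ)) y) < ε := by
    have hc : UniformContinuous (fun x (a : Fin k → Fin N) => T (fun i => (a i : ℤ)) x) :=
      CompactSpace.uniformContinuous_of_continuous (continuous_pi fun a => hT.cont _)
    obtain ⟨r, hr, h⟩ := Metric.uniformContinuous_iff.1 hc ε hε
    exact ⟨r, hr, fun x y hxy a => (dist_pi_lt_iff hε).1 (h hxy) a⟩
  obtain ⟨r, hr, hrT⟩ := hunif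
  obtain ⟨m, P, hP, f, hf, hfr⟩ := exists_embedding_complex (X := X) hr
  refine ⟨hP.toFinset.sup Finset.card, m, P, hP, ?_, f, hf, ?_⟩
  · intro s hs
    exact (Finset.le_sup (f := Finset.card) (hP.mem_toFinset.2 hs)).trans (Nat.le_succ _)
  · intro x y hxy
    have : Nonempty (Fin k → Fin N) := ⟨fun _ => ⟨0, hN⟩⟩
    obtain ⟨a, ha⟩ := exists_eq_ciSup_of_finite (f := fun a : Fin k → Fin N =>
      dist (T (fun i => (a i : ℤ)) x) (T (fun i => (a i : ℤ)) y))
    rw [blockRho, ← ha]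
    exact hrT x y (hfr x y hxy) a

/-- The mean dimension hypothesis in usable form: for some block size `N` there is a continuous `φ`
whose fibers are `ε`-small on the block `[N]`, and whose image is covered by finitely many smooth
pieces with `w < D * N ^ k / 2` parameters. -/
lemma exists_block_embedding {k D : ℕ} {X : Type*} [MetricSpace X] [CompactSpace X]
    {T : (Fin k → ℤ) → X → X} (hT : IsZkAction T) (hmdim : mdim X T < (D : ℝ≥0∞) / 2)
    {ε : ℝ} (hε : 0 < ε) :
    ∃ (N w m : ℕ) (φ : X → Fin m → ℝ) (ι : Type) (_ : Finite ι)
      (a : ι → (Fin w → ℝ) → Fin m → ℝ), 1 ≤ N ∧ 2 * w < D * N ^ k ∧ Continuous φ ∧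
      (∀ i, ContDiff ℝ 1 (a i)) ∧ (∀ x, ∃ i v, φ x = a i v) ∧
      ∀ x y, φ x = φ y → ∀ b : Fin k → Fin N,
        dist (T (fun i => (b i : ℤ)) x) (T (fun i => (b i : ℤ)) y) < ε := by
  classical
  have h1 : (⨅ (N : ℕ) (_ : 1 ≤ N),
      (widim X (blockRho T dist N) ε : ℝ≥0∞) / (N : ℝ≥0∞) ^ k) < (D : ℝ≥0∞) / 2 :=
    lt_of_le_of_lt (le_iSup₂ (f := fun (ε : ℝ) (_ : 0 < ε) => ⨅ (N : ℕ) (_ : 1 ≤ N),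
      (widim X (blockRho T dist N) ε : ℝ≥0∞) / (N : ℝ≥0∞) ^ k) ε hε) hmdim
  simp only [iInf_lt_iff] at h1
  obtain ⟨N, hN, hlt⟩ := h1
  set w := widim X (blockRho T dist N) ε with hw
  obtain ⟨m, P, hP, hcard, f, hf, hfε⟩ := widim_spec hT hN hε
  have hNk : (N : ℝ≥0∞) ^ k ≠ 0 := pow_ne_zero _ (by exact_mod_cast (by omega : N ≠ 0))
  have hNk' : (N : ℝ≥0∞) ^ k ≠ ⊤ := ENNReal.pow_ne_top (ENNReal.natCast_ne_top N)
  have hdim : 2 * w < D * N ^ k := by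
    rw [ENNReal.div_lt_iff (Or.inl hNk) (Or.inl hNk'), ENNReal.mul_comm_div, ← mul_div_assoc,
      ENNReal.lt_div_iff_mul_lt (by simp) (by simp)] at hlt
    have : ((w * 2 : ℕ) : ℝ≥0∞) < ((D * N ^ k : ℕ) : ℝ≥0∞) := by push_cast; exact hlt
    have := Nat.cast_lt.1 this
    omega
  have := hP.to_subtype
  have hch : ∀ s : P.faces, ∃ a : (Fin w → ℝ) → EuclideanSpace ℝ (Fin m), ContDiff ℝ 1 a ∧
      convexHull ℝ ((s : Finset (EuclideanSpace ℝ (Fin m))) : Set (EuclideanSpace ℝ (Fin m))) ⊆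
        range a := fun s =>
    exists_face_chart _ w (hcard s s.2)
  choose a ha hra using hch
  refine ⟨N, w, m, fun x => WithLp.ofLp (f x : EuclideanSpace ℝ (Fin m)), P.faces, inferInstance,
    fun s v => WithLp.ofLp (a s v), hN, hdim, ?_, ?_, ?_, ?_⟩
  · exact (PiLp.continuous_ofLp 2 _).comp (continuous_subtype_val.comp hf)
  · intro s
    exact (PiLp.continuousLinearEquiv 2 ℝ (fun _ : Fin m => ℝ)).contDiff.comp (ha s)
  · intro x
    obtain ⟨s, hs, hx⟩ := Geometry.SimplicialComplex.mem_space_iff.1 (f x).2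
    obtain ⟨v, hv⟩ := hra ⟨s, hs⟩ hx
    exact ⟨⟨s, hs⟩, v, by simp only [hv]⟩
  · intro x y hxy b
    have : f x = f y := Subtype.ext (WithLp.ofLp_injective 2 hxy)
    exact (le_blockRho T N x y b).trans_lt (hfε x y this)

/-! ### Perturbation on a single tile -/

/-- The perturbation on a single tile `W`. The points of `W` are covered by translates of `[N]` with
corners in `J`, recorded by `φ` with `w` parameters each, and by single points in `B`, recorded by
the cruder `ψ` with `q` parameters each. When the total number of parameters is less than half of
`W.card * D`, the orbit segment of `f` along `W` can be perturbed in general position. -/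
lemma exists_tile_map {k D N w m q : ℕ} {X : Type*} [MetricSpace X] [CompactSpace X]
    {T : (Fin k → ℤ) → X → X} (hT : IsZkAction T) {ε η : ℝ} (hη : 0 < η)
    {φ : X → Fin m → ℝ} (hφ : Continuous φ) {ι : Type} [Finite ι]
    {a : ι → (Fin w → ℝ) → Fin m → ℝ} (ha : ∀ i, ContDiff ℝ 1 (a i))
    (hcov : ∀ x, ∃ i v, φ x = a i v)
    (hφε : ∀ x y, φ x = φ y → ∀ b : Fin k → Fin N,
      dist (T (fun i => (b i : ℤ)) x) (T (fun i => (b i : ℤ)) y) < ε)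
    {ψ : X → Fin q → ℝ} (hψ : Continuous ψ) (hψε : ∀ x y, ψ x = ψ y → dist x y < ε)
    {f : X → Fin D → ℝ} (hf : Continuous f) (hfη : ∀ x y, dist x y < ε → dist (f x) (f y) < η)
    (W J B : Finset (Fin k → ℤ))
    (hW : ∀ n ∈ W, n ∈ B ∨ ∃ c ∈ J, ∃ b : Fin k → Fin N, n = (fun i => (b i : ℤ)) + c)
    (hcard : 2 * (J.card * w + B.card * q) < W.card * D) :
    ∃ G : X → W → Fin D → ℝ, Continuous G ∧
      (∀ x n, dist (G x n) (f (T n x)) < 2 * η) ∧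
      ∀ x y, G x = G y → ∀ n ∈ W, dist (T n x) (T n y) < ε := by
  let M := (J × Fin m) ⊕ (B × Fin q)
  let V := (J → Fin w → ℝ) × (B → Fin q → ℝ)
  let Φ : X → M → ℝ := fun x =>
    Sum.elim (fun p => φ (T p.1 x) p.2) (fun p => ψ (T p.1 x) p.2)
  let ch : (J → ι) → V → M → ℝ := fun i v =>
    Sum.elim (fun p => a (i p.1) (v.1 p.1) p.2) (fun p => v.2 p.1 p.2)
  have hΦ : Continuous Φ := by
    refine continuous_pi fun l => ?_
    rcases l with l | l
    · exact (continuous_apply _).comp (hφ.comp (hT.cont _))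
    · exact (continuous_apply _).comp (hψ.comp (hT.cont _))
  have hch : ∀ i, ContDiff ℝ 1 (ch i) := by
    intro i
    rw [contDiff_pi]
    rintro (l | l)
    · exact (contDiff_pi.1 (ha (i l.1)) l.2).comp ((contDiff_apply ℝ _ l.1).comp contDiff_fst)
    · exact (contDiff_apply ℝ ℝ l.2).comp ((contDiff_apply ℝ _ l.1).comp contDiff_snd)
  have hcov' : ∀ x, ∃ i v, Φ x = ch i v := by
    intro x
    choose i v hiv using fun c : J => hcov (T c x)
    refine ⟨i, (v, fun b => ψ (T b x)), ?_⟩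
    funext l
    rcases l with l | l
    · simp [Φ, ch, hiv]
    · simp [Φ, ch]
  have hdim : 2 * Module.finrank ℝ V < Module.finrank ℝ (W → Fin D → ℝ) := by
    simpa [V, Module.finrank_prod, Module.finrank_pi_fintype] using hcard
  have hsep : ∀ x y, Φ x = Φ y → ∀ n ∈ W, dist (T n x) (T n y) < ε := by
    intro x y hxy n hn
    rcases hW n hn with hB | ⟨c, hc, b, rfl⟩
    · apply hψε
      funext j
      exact congrFun hxy (Sum.inr (⟨n, hB⟩, j))
    · rw [hT.map_add, hT.map_add]
      apply hφε
      funext j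
      exact congrFun hxy (Sum.inl (⟨c, hc⟩, j))
  obtain ⟨G, hG, hGd, hGi⟩ := exists_generic_map ch hch hdim hΦ hcov'
    (G := fun x (n : W) => f (T n x)) (continuous_pi fun n => hf.comp (hT.cont _)) hη
    (fun x y hxy => (dist_pi_lt_iff hη).2 fun n => hfη _ _ (hsep x y hxy n n.2))
  exact ⟨G, hG, fun x n => (dist_le_pi_dist _ _ n).trans_lt (hGd x),
    fun x y hxy => hsep x y (hGi x y hxy)⟩

/-- Packing `W` by cubes of the lattice `(N ℤ)^k`. Every point of `W` is either in a cube contained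
in `W` (with corner in `J`) or in the remainder `B`. The remainder misses the `N`-interior `A`, so
it is small enough that its `q` parameters per point do not spoil the bound `2 * w < D * N ^ k`. -/
lemma exists_cube_packing {k D N w q : ℕ} (hN : 1 ≤ N) (hw : 2 * w < D * N ^ k)
    (W A : Finset (Fin k → ℤ)) (hWne : W.Nonempty)
    (hA : ∀ n ∈ A, ∀ m : Fin k → ℤ, (∀ i, |m i| ≤ N) → n + m ∈ W)
    (hcard : (2 * q + 1) * N ^ k * (W \ A).card ≤ A.card) :
    ∃ J B : Finset (Fin k → ℤ),
      (∀ n ∈ W, n ∈ B ∨ ∃ c ∈ J, ∃ b : Fin k → Fin N, n = (fun i => (b i : ℤ)) + c) ∧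
      2 * (J.card * w + B.card * q) < W.card * D := by
  classical
  have hN0 : (0 : ℤ) < N := by exact_mod_cast hN
  -- `fl n` is the corner of the lattice cube containing `n`, and `md n` the position inside it.
  let fl : (Fin k → ℤ) → Fin k → ℤ := fun n i => n i / N * N
  let md : (Fin k → ℤ) → Fin k → Fin N := fun n i =>
    ⟨(n i % N).toNat, by
      have := Int.emod_nonneg (n i) hN0.ne'
      have := Int.emod_lt_of_pos (n i) hN0
      omega⟩
  have hmd : ∀ n i, ((md n i : ℕ) : ℤ) = n i % N := fun n i =>
    Int.toNat_of_nonneg (Int.emod_nonneg (n i) hN0.ne')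
  have hdec : ∀ n, n = (fun i => (md n i : ℤ)) + fl n := by
    intro n; funext i
    have := Int.emod_add_ediv_mul (n i) N
    simp only [Pi.add_apply, hmd, fl]; omega
  have huniq : ∀ n (b : Fin k → Fin N), fl ((fun i => (b i : ℤ)) + fl n) = fl n := by
    intro n b; funext i
    have hb : (b i : ℤ) / N = 0 :=
      Int.ediv_eq_zero_of_lt (by positivity) (by exact_mod_cast (b i).2)
    simp only [fl, Pi.add_apply]
    rw [Int.add_mul_ediv_right _ _ hN0.ne', hb, zero_add]
  let J : Finset (Fin k → ℤ) := (W.image fl).filter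
    fun c => ∀ b : Fin k → Fin N, (fun i => (b i : ℤ)) + c ∈ W
  let B : Finset (Fin k → ℤ) := W.filter fun n => fl n ∉ J
  have hJfl : ∀ c ∈ J, ∀ b : Fin k → Fin N, fl ((fun i => (b i : ℤ)) + c) = c := by
    intro c hc b
    obtain ⟨n, -, rfl⟩ := Finset.mem_image.1 (Finset.mem_filter.1 hc).1
    exact huniq n b
  have hcov : ∀ n ∈ W, n ∈ B ∨ ∃ c ∈ J, ∃ b : Fin k → Fin N, n = (fun i => (b i : ℤ)) + c := by
    intro n hn
    by_cases h : fl n ∈ J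
    · exact Or.inr ⟨fl n, h, md n, hdec n⟩
    · exact Or.inl (Finset.mem_filter.2 ⟨hn, h⟩)
  refine ⟨J, B, hcov, ?_⟩
  let e : (Fin k → ℤ) × (Fin k → Fin N) → Fin k → ℤ := fun p => (fun i => (p.2 i : ℤ)) + p.1
  have hcubes : (J ×ˢ (Finset.univ : Finset (Fin k → Fin N))).card = J.card * N ^ k := by
    simp [Finset.card_product]
  have h1 : J.card * N ^ k + B.card ≤ W.card := by
    rw [← hcubes]
    have hsub : (J ×ˢ (Finset.univ : Finset (Fin k → Fin N))).card ≤ (W \ B).card := by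
      refine Finset.card_le_card_of_injOn e ?_ ?_
      · rintro ⟨c, b⟩ hcb
        have hc : c ∈ J := by simpa using hcb
        have hm := (Finset.mem_filter.1 hc).2 b
        simp only [Finset.coe_sdiff, Set.mem_sdiff, Finset.mem_coe, e]
        refine ⟨hm, fun hB => (Finset.mem_filter.1 hB).2 ?_⟩
        rw [hJfl c hc b]; exact hc
      · rintro ⟨c, b⟩ hcb ⟨c', b'⟩ hcb' heq
        have hc : c ∈ J := by simpa using hcb
        have hc' : c' ∈ J := by simpa using hcb'
        simp only [e] at heq
        have h2 : c = c' := by rw [← hJfl c hc b, heq, hJfl c' hc' b']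
        subst h2
        have h3 := add_right_cancel heq
        congr 1
        funext i
        have := congrFun h3 i
        exact Fin.ext (by exact_mod_cast this)
    have hBW : B ⊆ W := Finset.filter_subset _ W
    have := Finset.card_sdiff_add_card_eq_card hBW
    omega
  have hAJ : ∀ n ∈ A, fl n ∈ J := by
    intro n hn
    have hnW : n ∈ W := by simpa using hA n hn 0 (by simp)
    refine Finset.mem_filter.2 ⟨Finset.mem_image_of_mem _ hnW, fun b => ?_⟩
    have := hA n hn ((fun i => (b i : ℤ)) + fl n - n) (by
      intro i
      have h4 := congrFun (hdec n) i
      simp only [Pi.add_apply, Pi.sub_apply] at h4 ⊢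
      have := (md n i).2
      have := (b i).2
      rw [abs_le]; constructor <;> omega)
    simpa using this
  have h2 : A.card ≤ J.card * N ^ k := by
    rw [← hcubes]
    refine Finset.card_le_card_of_injOn (fun n => (fl n, md n)) ?_ ?_
    · intro n hn
      simpa using hAJ n hn
    · intro n _ n' _ heq
      simp only [Prod.mk.injEq] at heq
      rw [hdec n, hdec n', heq.1, heq.2]
  have h3 : B.card ≤ (W \ A).card := by
    refine Finset.card_le_card fun n hn => ?_
    obtain ⟨hnW, hnJ⟩ := Finset.mem_filter.1 hn
    exact Finset.mem_sdiff.2 ⟨hnW, fun h => hnJ (hAJ n h)⟩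
  have hNk : 0 < N ^ k := by positivity
  have h4 : (2 * q + 1) * B.card ≤ J.card := by
    refine Nat.le_of_mul_le_mul_right ?_ hNk
    calc (2 * q + 1) * B.card * N ^ k = (2 * q + 1) * N ^ k * B.card := by ring
      _ ≤ (2 * q + 1) * N ^ k * (W \ A).card := Nat.mul_le_mul_left _ h3
      _ ≤ _ := hcard.trans h2
  have h5 : 0 < J.card := by
    by_contra h
    have hJ0 : J.card = 0 := by omega
    have hA0 : A = ∅ := by
      rw [← Finset.card_eq_zero]; rw [hJ0] at h2; omega
    rw [hA0] at hcard
    have hW0 : 0 < W.card := hWne.card_pos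
    have hpos : 0 < (2 * q + 1) * N ^ k * W.card :=
      Nat.mul_pos (Nat.mul_pos (Nat.succ_pos _) (Nat.pow_pos hN)) hW0
    rw [Finset.sdiff_empty, Finset.card_empty] at hcard
    omega
  have h6 : 2 * q * B.card < J.card := by
    rcases Nat.eq_zero_or_pos B.card with h | h
    · rw [h, Nat.mul_zero]; exact h5
    · have : 2 * q * B.card + B.card ≤ J.card := by rw [← Nat.succ_mul]; exact h4
      omega
  have h7 : J.card * (2 * w + 1) ≤ J.card * (D * N ^ k) := Nat.mul_le_mul_left _ hw
  have h8 : (J.card * N ^ k + B.card) * D ≤ W.card * D := Nat.mul_le_mul_right _ h1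
  nlinarith [Nat.zero_le (B.card * D)]

/-! ### Boundaries of Voronoi cells -/

/-- The half-open unit cube with lowest corner the lattice point `n`. -/
def unitCube {k : ℕ} (n : Fin k → ℤ) : Set (Fin k → ℝ) :=
  Set.pi univ fun i => Ico (n i : ℝ) (n i + 1)

lemma volume_unitCube {k : ℕ} (n : Fin k → ℤ) : MeasureTheory.volume (unitCube n) = 1 := by
  simp [unitCube, MeasureTheory.volume_pi_pi, Real.volume_Ico]

lemma measurableSet_unitCube {k : ℕ} (n : Fin k → ℤ) : MeasurableSet (unitCube n) :=
  MeasurableSet.univ_pi fun _ => measurableSet_Ico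

lemma eq_floor_of_mem_unitCube {k : ℕ} {n : Fin k → ℤ} {u : Fin k → ℝ} (h : u ∈ unitCube n) :
    n = fun i => ⌊u i⌋ := by
  funext i
  have := h i (mem_univ i)
  exact (Int.floor_eq_iff.2 ⟨this.1, this.2⟩).symm

open scoped Pointwise in
/-- Comparison of lattice point counts in a family of homothetic sets `V s`: if `V t` contains the
unit cubes at the points of `W`, and every unit cube meeting `V s` is indexed by `A`, comparing
volumes bounds `W.card` by `(t / s) ^ k * A.card`. -/
lemma card_le_of_dilation {k : ℕ} (V : ℝ → Set (Fin k → ℝ))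
    (hV : ∀ s t : ℝ, 0 < s → 0 < t → ∀ u ∈ V t, (s / t) • u ∈ V s)
    {s t : ℝ} (hs : 0 < s) (ht : 0 < t) (W A : Finset (Fin k → ℤ))
    (hW : ∀ n ∈ W, unitCube n ⊆ V t) (hA : ∀ u ∈ V s, (fun i => ⌊u i⌋) ∈ A) :
    (W.card : ℝ) ≤ (t / s) ^ k * A.card := by
  have h1 : (W.card : ℝ≥0∞) ≤ MeasureTheory.volume (V t) := by
    calc (W.card : ℝ≥0∞) = ∑ n ∈ W, MeasureTheory.volume (unitCube n) := by
          simp [volume_unitCube]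
      _ = MeasureTheory.volume (⋃ n ∈ W, unitCube n) := by
          rw [MeasureTheory.measure_biUnion_finset]
          · intro n _ n' _ hne
            refine Set.disjoint_left.2 fun u hu hu' => hne ?_
            rw [eq_floor_of_mem_unitCube hu, eq_floor_of_mem_unitCube hu']
          · exact fun n _ => measurableSet_unitCube n
      _ ≤ _ := MeasureTheory.measure_mono (iUnion₂_subset hW)
  have h2 : MeasureTheory.volume (V s) ≤ A.card := by
    calc MeasureTheory.volume (V s) ≤ MeasureTheory.volume (⋃ n ∈ A, unitCube n) := by
          refine MeasureTheory.measure_mono fun u hu => mem_iUnion₂.2 ⟨_, hA u hu, ?_⟩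
          exact fun i _ => ⟨Int.floor_le _, Int.lt_floor_add_one _⟩
      _ ≤ ∑ n ∈ A, MeasureTheory.volume (unitCube n) := MeasureTheory.measure_biUnion_finset_le _ _
      _ = _ := by simp [volume_unitCube]
  have h3 : MeasureTheory.volume (V t) ≤ ENNReal.ofReal ((t / s) ^ k) * MeasureTheory.volume (V s) := by
    have hsub : V t ⊆ (t / s) • V s := by
      intro u hu
      refine ⟨(s / t) • u, hV s t hs ht u hu, ?_⟩
      simp only [smul_smul]
      rw [div_mul_div_cancel₀' ht.ne', div_self hs.ne', one_smul]
    refine (MeasureTheory.measure_mono hsub).trans ?_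
    rw [MeasureTheory.Measure.addHaar_smul, Module.finrank_fin_fun, abs_of_nonneg (by positivity)]
  have h4 : (W.card : ℝ≥0∞) ≤ ENNReal.ofReal ((t / s) ^ k * A.card) := by
    rw [ENNReal.ofReal_mul (by positivity), ENNReal.ofReal_natCast]
    exact h1.trans (h3.trans (by gcongr))
  have h5 := ENNReal.toReal_mono ENNReal.ofReal_ne_top h4
  rwa [ENNReal.toReal_natCast, ENNReal.toReal_ofReal (by positivity)] at h5

/-- Voronoi cells of well-separated sets have small boundary. Here `W` is the set of lattice points
of the Voronoi cell of the centre `0` (with arbitrary choices on the boundary) with respect to the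
other centres `C`. If these are at distance at least `r` from `0` with `r` large, then all but a
`1 / K` fraction of `W` consists of points whose `N`-neighbourhood lies in `W`. The cell is compared
with its dilations by `1 - σ` and `1 + σ`; no bound on the diameter of the cell is needed. -/
lemma voronoi_core (k K N : ℕ) : ∃ r : ℕ, 1 ≤ r ∧ ∀ C : Set (Fin k → ℤ),
    (∀ c ∈ C, c ≠ 0 → ∃ i, (r : ℤ) ≤ |c i|) → ∀ W : Finset (Fin k → ℤ),
    (∀ n, (∀ c ∈ C, c ≠ 0 → 2 * ∑ i, n i * c i < ∑ i, c i ^ 2) → n ∈ W) →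
    (∀ n ∈ W, ∀ c ∈ C, c ≠ 0 → 2 * ∑ i, n i * c i ≤ ∑ i, c i ^ 2) →
    ∃ A : Finset (Fin k → ℤ), (∀ n ∈ A, ∀ m : Fin k → ℤ, (∀ i, |m i| ≤ N) → n + m ∈ W) ∧
      K * (W \ A).card ≤ A.card := by
  classical
  obtain ⟨σ, hσ0, hσ1, hσ⟩ : ∃ σ : ℝ, 0 < σ ∧ σ < 1 ∧
      ((1 + σ) / (1 - σ)) ^ k < 1 + 1 / ((K : ℝ) + 1) := by
    have hc : ContinuousAt (fun σ : ℝ => ((1 + σ) / (1 - σ)) ^ k) 0 := by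
      refine ContinuousAt.pow (ContinuousAt.div ?_ ?_ (by norm_num)) k <;> fun_prop
    have h1 : ∀ᶠ σ in 𝓝 (0 : ℝ), ((1 + σ) / (1 - σ)) ^ k < 1 + 1 / ((K : ℝ) + 1) := by
      refine hc.eventually_lt_const ?_
      simp only [add_zero, sub_zero, div_one, one_pow]
      have : 0 < 1 / ((K : ℝ) + 1) := by positivity
      linarith
    have h2 : ∀ᶠ σ in 𝓝 (0 : ℝ), σ < 1 := eventually_lt_nhds one_pos
    have h3 : ∀ᶠ σ in 𝓝[>] (0 : ℝ), 0 < σ := self_mem_nhdsWithin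
    obtain ⟨σ, h⟩ := (h3.and ((h2.and h1).filter_mono nhdsWithin_le_nhds)).exists
    exact ⟨σ, h.1, h.2.1, h.2.2⟩
  obtain ⟨r, hr⟩ := exists_nat_gt (2 * ((N : ℝ) + 1) * k / σ)
  have hr0 : (0 : ℝ) < r := lt_of_le_of_lt (by positivity) hr
  rw [div_lt_iff₀ hσ0] at hr
  refine ⟨r, by exact_mod_cast hr0, fun C hC W hW1 hW2 => ?_⟩
  -- The `ℓ¹` norm of a far-away centre is negligible against its squared `ℓ²` norm.
  have hkey : ∀ c ∈ C, c ≠ 0 →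
      2 * ((N : ℝ) + 1) * ∑ i, |(c i : ℝ)| < σ * ∑ i, (c i : ℝ) ^ 2 := by
    intro c hc hc0
    obtain ⟨i₁, hi₁⟩ := hC c hc hc0
    obtain ⟨i₀, -, hi₀⟩ := Finset.exists_max_image Finset.univ (fun i => |(c i : ℝ)|) ⟨i₁, Finset.mem_univ _⟩
    set M := |(c i₀ : ℝ)| with hM
    have hrM : (r : ℝ) ≤ M := by
      have : (r : ℝ) ≤ |(c i₁ : ℝ)| := by exact_mod_cast hi₁
      exact this.trans (hi₀ i₁ (Finset.mem_univ _))
    have h1 : ∑ i, |(c i : ℝ)| ≤ k * M := by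
      calc _ ≤ ∑ _i : Fin k, M := Finset.sum_le_sum fun i hi => hi₀ i hi
        _ = _ := by simp
    have h2 : M ^ 2 ≤ ∑ i, (c i : ℝ) ^ 2 := by
      rw [hM, sq_abs]
      exact Finset.single_le_sum (f := fun i => (c i : ℝ) ^ 2) (fun i _ => sq_nonneg _)
        (Finset.mem_univ i₀)
    have hM0 : 0 < M := lt_of_lt_of_le hr0 hrM
    calc 2 * ((N : ℝ) + 1) * ∑ i, |(c i : ℝ)| ≤ 2 * ((N : ℝ) + 1) * (k * M) := by gcongr
      _ = (2 * ((N : ℝ) + 1) * k) * M := by ring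
      _ < (r * σ) * M := by gcongr
      _ ≤ (M * σ) * M := by gcongr
      _ = σ * M ^ 2 := by ring
      _ ≤ _ := by gcongr
  have hdot : ∀ (v : Fin k → ℝ) (c : Fin k → ℤ) (R : ℝ), (∀ i, |v i| ≤ R) →
      ∑ i, v i * c i ≤ R * ∑ i, |(c i : ℝ)| := by
    intro v c R hv
    rw [Finset.mul_sum]
    refine Finset.sum_le_sum fun i _ => ?_
    calc v i * c i ≤ |v i * c i| := le_abs_self _
      _ = |v i| * |(c i : ℝ)| := abs_mul _ _
      _ ≤ _ := by gcongr; exact hv i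
  -- `V s` is the real Voronoi cell dilated by the factor `s`.
  let V : ℝ → Set (Fin k → ℝ) := fun s =>
    {u | ∀ c ∈ C, c ≠ 0 → 2 * ∑ i, u i * c i ≤ s * ∑ i, (c i : ℝ) ^ 2}
  let A : Finset (Fin k → ℤ) := W.filter
    fun n => ∀ m : Fin k → ℤ, (∀ i, |m i| ≤ N) → n + m ∈ W
  have hcard := card_le_of_dilation V
    (by
      intro s t hs ht u hu c hc hc0
      have := hu c hc hc0
      have h2 : ∑ i, ((s / t) • u) i * (c i : ℝ) = s / t * ∑ i, u i * c i := by
        rw [Finset.mul_sum]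
        exact Finset.sum_congr rfl fun i _ => by simp [mul_assoc]
      rw [h2]
      calc 2 * (s / t * ∑ i, u i * c i) = s / t * (2 * ∑ i, u i * c i) := by ring
        _ ≤ s / t * (t * ∑ i, (c i : ℝ) ^ 2) := by gcongr
        _ = _ := by field_simp)
    (s := 1 - σ) (t := 1 + σ) (by linarith) (by linarith) W A
    (by
      intro n hn u hu c hc hc0
      have h1 : (2 * ∑ i, (n i : ℝ) * c i) ≤ ∑ i, (c i : ℝ) ^ 2 := by
        exact_mod_cast hW2 n hn c hc hc0
      have h2 := hdot (fun i => u i - n i) c 1 (by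
        intro i
        have := hu i (mem_univ i)
        rw [abs_of_nonneg (by linarith [this.1])]
        linarith [this.2])
      have h3 := hkey c hc hc0
      have h4 : ∑ i, u i * (c i : ℝ) = ∑ i, (n i : ℝ) * c i + ∑ i, (u i - n i) * c i := by
        rw [← Finset.sum_add_distrib]
        exact Finset.sum_congr rfl fun i _ => by ring
      have h5 : 0 ≤ (N : ℝ) * ∑ i, |(c i : ℝ)| := by positivity
      rw [h4]
      linarith)
    (by
      intro u hu
      have hmem : ∀ m : Fin k → ℤ, (∀ i, |m i| ≤ N) → (fun i => ⌊u i⌋) + m ∈ W := by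
        intro m hm
        apply hW1
        intro c hc hc0
        have h1 := hu c hc hc0
        have h2 := hdot (fun i => ((⌊u i⌋ + m i : ℤ) : ℝ) - u i) c (N + 1) (by
          intro i
          have e1 := Int.floor_le (u i)
          have e2 := Int.lt_floor_add_one (u i)
          have e3 : |(m i : ℝ)| ≤ N := by exact_mod_cast hm i
          rw [abs_le] at e3 ⊢
          push_cast
          constructor <;> linarith [e3.1, e3.2])
        have h3 := hkey c hc hc0
        have h4 : ∑ i, ((⌊u i⌋ + m i : ℤ) : ℝ) * (c i : ℝ) =
            ∑ i, u i * c i + ∑ i, (((⌊u i⌋ + m i : ℤ) : ℝ) - u i) * c i := by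
          rw [← Finset.sum_add_distrib]
          exact Finset.sum_congr rfl fun i _ => by ring
        have h5 : 2 * ∑ i, ((⌊u i⌋ + m i : ℤ) : ℝ) * (c i : ℝ) < ∑ i, (c i : ℝ) ^ 2 := by
          rw [h4]; linarith
        exact_mod_cast h5
      refine Finset.mem_filter.2 ⟨?_, hmem⟩
      simpa using hmem 0 (by simp))
  refine ⟨A, fun n hn => (Finset.mem_filter.1 hn).2, ?_⟩
  have hsplit := Finset.card_sdiff_add_card_eq_card (Finset.filter_subset _ W : A ⊆ W)
  have hs' : (((W \ A).card : ℝ)) + A.card = W.card := by exact_mod_cast hsplit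
  have h6 : (W.card : ℝ) ≤ (1 + 1 / ((K : ℝ) + 1)) * A.card :=
    hcard.trans (by gcongr)
  have h7 : ((W \ A).card : ℝ) ≤ 1 / ((K : ℝ) + 1) * A.card := by linarith
  have h8 : (K : ℝ) * (W \ A).card ≤ A.card := by
    calc (K : ℝ) * (W \ A).card ≤ (K + 1) * (1 / ((K : ℝ) + 1) * A.card) := by gcongr; linarith
      _ = A.card := by field_simp
  exact_mod_cast h8

/-! ### Markers and the dynamical Voronoi tiling -/

/-- The box `{-r, …, r}^k`. -/
noncomputable def box (k r : ℕ) : Finset (Fin k → ℤ) := Fintype.piFinset fun _ => Finset.Icc (-(r : ℤ)) r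

lemma mem_box {k r : ℕ} {n : Fin k → ℤ} : n ∈ box k r ↔ ∀ i, |n i| ≤ r := by
  simp [box, Fintype.mem_piFinset, abs_le]

lemma neg_mem_box {k r : ℕ} {n : Fin k → ℤ} (h : n ∈ box k r) : -n ∈ box k r := by
  rw [mem_box] at h ⊢
  simpa using h

lemma zero_mem_box {k r : ℕ} : (0 : Fin k → ℤ) ∈ box k r := by
  rw [mem_box]; simp

section Dynamics

variable {k : ℕ} {Z : Type*} [MetricSpace Z] [CompactSpace Z] {S : (Fin k → ℤ) → Z → Z}

lemma action_neg_cancel {Y : Type*} [TopologicalSpace Y] {R : (Fin k → ℤ) → Y → Y}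
    (hR : IsZkAction R) (n : Fin k → ℤ) (z : Y) : R (-n) (R n z) = z := by
  rw [← hR.map_add, neg_add_cancel, hR.map_zero]

/-- A free zero-dimensional system has a clopen marker set `M`: visits to `M` are `r`-separated, and
every orbit visits `M` within the box of radius `r`. It is built greedily from a finite cover by
clopen sets that are disjoint from their translates by the nonzero elements of the box. -/
lemma exists_marker (hS : IsZkAction S)
    (hzerodim : ∀ (z : Z) (U : Set Z), IsOpen U → z ∈ U →
      ∃ W : Set Z, IsClopen W ∧ z ∈ W ∧ W ⊆ U)
    (hfree : ∀ (z : Z) (g : Fin k → ℤ), g ≠ 0 → S g z ≠ z) (r : ℕ) :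
    ∃ M : Set Z, IsClopen M ∧ (∀ z ∈ M, ∀ n ∈ box k r, n ≠ 0 → S n z ∉ M) ∧
      ∀ z, ∃ n ∈ box k r, S n z ∈ M := by
  classical
  have hloc : ∀ z : Z, ∃ U : Set Z, IsClopen U ∧ z ∈ U ∧
      ∀ y ∈ U, ∀ n ∈ box k r, n ≠ 0 → S n y ∉ U := by
    intro z
    have h1 : ∀ n : Fin k → ℤ, ∃ O : Set Z, IsOpen O ∧ z ∈ O ∧ (n ≠ 0 → ∀ y ∈ O, S n y ∉ O) := by
      intro n
      by_cases hn : n = 0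
      · exact ⟨univ, isOpen_univ, mem_univ _, fun h => absurd hn h⟩
      · obtain ⟨P, Q, hP, hQ, hzP, hzQ, hPQ⟩ := t2_separation (hfree z n hn).symm
        refine ⟨P ∩ S n ⁻¹' Q, hP.inter (hQ.preimage (hS.cont n)), ⟨hzP, hzQ⟩, ?_⟩
        intro _ y hy hy'
        exact disjoint_left.1 hPQ hy'.1 hy.2
    choose O hO hzO hOn using h1
    obtain ⟨U, hU, hzU, hUO⟩ := hzerodim z (⋂ n ∈ box k r, O n)
      (isOpen_biInter_finset fun n _ => hO n) (mem_iInter₂.2 fun n _ => hzO n)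
    refine ⟨U, hU, hzU, fun y hy n hn hn0 hy' => ?_⟩
    exact hOn n hn0 y (mem_iInter₂.1 (hUO hy) n hn) (mem_iInter₂.1 (hUO hy') n hn)
  choose U hU hzU hUn using hloc
  have hgreedy : ∀ t : Finset Z, ∃ M : Set Z, IsClopen M ∧
      (∀ z ∈ M, ∀ n ∈ box k r, n ≠ 0 → S n z ∉ M) ∧
      ∀ i ∈ t, ∀ z ∈ U i, ∃ n ∈ box k r, S n z ∈ M := by
    intro t
    induction t using Finset.induction_on with
    | empty => exact ⟨∅, isClopen_empty, by simp, by simp⟩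
    | insert i t _ ih =>
      obtain ⟨M, hM, hMs, hMc⟩ := ih
      refine ⟨M ∪ (U i \ ⋃ n ∈ box k r, S n ⁻¹' M), ?_, ?_, ?_⟩
      · exact hM.union ((hU i).diff
          ((box k r).finite_toSet.isClopen_biUnion fun n _ => hM.preimage (hS.cont n)))
      · rintro z (hz | ⟨hzU', hz⟩) n hn hn0 (hz' | ⟨hzU'', hz'⟩)
        · exact hMs z hz n hn hn0 hz'
        · refine hz' (mem_iUnion₂.2 ⟨-n, neg_mem_box hn, ?_⟩)
          rw [mem_preimage, action_neg_cancel hS]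
          exact hz
        · exact hz (mem_iUnion₂.2 ⟨n, hn, hz'⟩)
        · exact hUn i z hzU' n hn hn0 hzU''
      · intro j hj z hz
        rcases Finset.mem_insert.1 hj with rfl | hj
        · by_cases h : z ∈ ⋃ n ∈ box k r, S n ⁻¹' M
          · obtain ⟨n, hn, hnz⟩ := mem_iUnion₂.1 h
            exact ⟨n, hn, Or.inl hnz⟩
          · refine ⟨0, zero_mem_box, Or.inr ?_⟩
            rw [hS.map_zero]
            exact ⟨hz, h⟩
        · obtain ⟨n, hn, hnz⟩ := hMc j hj z hz
          exact ⟨n, hn, Or.inl hnz⟩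
  obtain ⟨t, -, ht⟩ := isCompact_univ.elim_nhds_subcover U
    fun z _ => (hU z).isOpen.mem_nhds (hzU z)
  obtain ⟨M, hM, hMs, hMc⟩ := hgreedy t
  refine ⟨M, hM, hMs, fun z => ?_⟩
  obtain ⟨i, hi, hz⟩ := mem_iUnion₂.1 (ht (mem_univ z))
  exact hMc i hi z hz

/-- A finite subset cut out by clopen conditions is locally constant. -/
lemma eventually_filter_eq {Y α : Type*} [TopologicalSpace Y] (B : Finset α)
    (p : α → Y → Prop) [∀ y, DecidablePred fun n => p n y] (hp : ∀ n, IsClopen {y | p n y})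
    (z : Y) : ∀ᶠ y in 𝓝 z, (B.filter fun n => p n y) = B.filter fun n => p n z := by
  have h1 : ∀ n, ∀ᶠ y in 𝓝 z, (p n y ↔ p n z) := by
    intro n
    by_cases h : p n z
    · filter_upwards [(hp n).isOpen.mem_nhds h] with y hy
      exact ⟨fun _ => h, fun _ => hy⟩
    · filter_upwards [(hp n).compl.isOpen.mem_nhds h] with y hy
      exact ⟨fun h' => absurd h' hy, fun h' => absurd h' h⟩
  have h2 : ∀ᶠ y in 𝓝 z, ∀ n ∈ B, (p n y ↔ p n z) :=
    (Filter.eventually_all_finset B).2 fun n _ => h1 n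
  filter_upwards [h2] with y hy
  exact Finset.filter_congr hy

/-- The dynamical Voronoi tiling. For each `z` the visit times to a clopen marker set serve as
centres; `c z` is a centre nearest to `0`, and for a marker point `z` the finite set `W z` consists
of those positions which choose `0` as their centre. All of these depend on `z` in a locally
constant way and are compatible with the action. Ties between nearest centres are broken by a fixed
choice depending on the finite set of candidates only, so the cells contain the open Voronoi cell
and are contained in the closed one; that is what the last clause says. -/
lemma exists_voronoi_tiling (hS : IsZkAction S)
    (hzerodim : ∀ (z : Z) (U : Set Z), IsOpen U → z ∈ U →
      ∃ W : Set Z, IsClopen W ∧ z ∈ W ∧ W ⊆ U)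
    (hfree : ∀ (z : Z) (g : Fin k → ℤ), g ≠ 0 → S g z ≠ z) (r : ℕ) :
    ∃ (c : Z → Fin k → ℤ) (W : Z → Finset (Fin k → ℤ)),
      (∀ z, ∀ᶠ y in 𝓝 z, c y = c z) ∧ (∀ z, ∀ᶠ y in 𝓝 z, W y = W z) ∧
      (∀ z, -c z ∈ W (S (c z) z)) ∧ (∀ z, ∀ n ∈ W z, c (S n z) = -n) ∧
      ∀ z, ∃ C : Set (Fin k → ℤ), (∀ n ∈ C, n ≠ 0 → ∃ i, (r : ℤ) ≤ |n i|) ∧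
        (∀ n, (∀ m ∈ C, m ≠ 0 → 2 * ∑ i, n i * m i < ∑ i, m i ^ 2) → n ∈ W (S (c z) z)) ∧
        (∀ n ∈ W (S (c z) z), ∀ m ∈ C, m ≠ 0 → 2 * ∑ i, n i * m i ≤ ∑ i, m i ^ 2) := by
  classical
  obtain ⟨M, hM, hMs, hMc⟩ := exists_marker hS hzerodim hfree r
  let sq : (Fin k → ℤ) → ℤ := fun n => ∑ i, n i ^ 2
  have hsqneg : ∀ n, sq (-n) = sq n := fun n => by simp [sq]
  -- Some centre lies in the box of radius `r`, so its squared norm is at most `k * r ^ 2 ≤ R ^ 2` and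
  -- a nearest centre is found in the box of radius `R`.
  let R : ℕ := k * r + r
  have hsel : ∀ B : Finset (Fin k → ℤ), ∃ n, B.Nonempty → n ∈ B ∧ ∀ m ∈ B, sq n ≤ sq m := by
    intro B
    by_cases hB : B.Nonempty
    · obtain ⟨n, hn, h⟩ := B.exists_min_image sq hB
      exact ⟨n, fun _ => ⟨hn, h⟩⟩
    · exact ⟨0, fun h => absurd h hB⟩
  choose sel hsel using hsel
  let F : Z → Finset (Fin k → ℤ) := fun z => (box k R).filter fun n => S n z ∈ M
  let c : Z → Fin k → ℤ := fun z => sel (F z)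
  have hsub : box k r ⊆ box k R := by
    intro n hn
    rw [mem_box] at hn ⊢
    intro i
    refine (hn i).trans ?_
    exact_mod_cast (by simp only [R]; omega : r ≤ R)
  have hFne : ∀ z, (F z).Nonempty := by
    intro z
    obtain ⟨n, hn, hnM⟩ := hMc z
    exact ⟨n, Finset.mem_filter.2 ⟨hsub hn, hnM⟩⟩
  have hcM : ∀ z, S (c z) z ∈ M := fun z => (Finset.mem_filter.1 (hsel _ (hFne z)).1).2
  have hcbox : ∀ z, c z ∈ box k R := fun z => (Finset.mem_filter.1 (hsel _ (hFne z)).1).1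
  have hcmin : ∀ z n, S n z ∈ M → sq (c z) ≤ sq n := by
    intro z n hn
    by_cases hnb : n ∈ box k R
    · exact (hsel _ (hFne z)).2 n (Finset.mem_filter.2 ⟨hnb, hn⟩)
    · obtain ⟨m, hm, hmM⟩ := hMc z
      have h1 : sq (c z) ≤ sq m :=
        (hsel _ (hFne z)).2 m (Finset.mem_filter.2 ⟨hsub hm, hmM⟩)
      have h2 : sq m ≤ k * (r : ℤ) ^ 2 := by
        calc sq m ≤ ∑ _i : Fin k, (r : ℤ) ^ 2 :=
              Finset.sum_le_sum fun i _ => sq_le_sq' (abs_le.1 (mem_box.1 hm i)).1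
                (abs_le.1 (mem_box.1 hm i)).2
          _ = _ := by simp
      obtain ⟨i, hi⟩ : ∃ i, (R : ℤ) < |n i| := by
        by_contra h
        push Not at h
        exact hnb (mem_box.2 h)
      have h3 : (R : ℤ) ^ 2 ≤ sq n := by
        calc (R : ℤ) ^ 2 ≤ |n i| ^ 2 := by gcongr
          _ = n i ^ 2 := sq_abs _
          _ ≤ sq n := Finset.single_le_sum (f := fun i => n i ^ 2) (fun i _ => sq_nonneg _)
            (Finset.mem_univ i)
      have h4 : k * (r : ℤ) ^ 2 ≤ (R : ℤ) ^ 2 := by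
        simp only [R]
        push_cast
        nlinarith [sq_nonneg ((k : ℤ) * r), sq_nonneg (r : ℤ),
          mul_nonneg (Int.natCast_nonneg k) (sq_nonneg (r : ℤ))]
      linarith
  have hFloc : ∀ z, ∀ᶠ y in 𝓝 z, F y = F z := fun z =>
    eventually_filter_eq (box k R) (fun n y => S n y ∈ M) (fun n => hM.preimage (hS.cont n)) z
  have hcloc : ∀ z, ∀ᶠ y in 𝓝 z, c y = c z := by
    intro z
    filter_upwards [hFloc z] with y hy
    simp only [c, hy]
  have hclc : IsLocallyConstant c := (IsLocallyConstant.iff_eventually_eq c).2 hcloc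
  let W : Z → Finset (Fin k → ℤ) := fun z => (box k R).filter fun n => c (S n z) = -n
  have hWloc : ∀ z, ∀ᶠ y in 𝓝 z, W y = W z := fun z =>
    eventually_filter_eq (box k R) (fun n y => c (S n y) = -n)
      (fun n => (hclc.isClopen_fiber (-n)).preimage (hS.cont n)) z
  have hexp : ∀ n m : Fin k → ℤ, sq (m - n) = sq m - 2 * ∑ i, n i * m i + sq n := by
    intro n m
    simp only [sq, Finset.mul_sum, ← Finset.sum_sub_distrib, ← Finset.sum_add_distrib]
    exact Finset.sum_congr rfl fun i _ => by simp only [Pi.sub_apply]; ring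
  refine ⟨c, W, hcloc, hWloc, fun z => ?_, fun z n hn => (Finset.mem_filter.1 hn).2, fun z => ?_⟩
  · refine Finset.mem_filter.2 ⟨neg_mem_box (hcbox z), ?_⟩
    rw [action_neg_cancel hS, neg_neg]
  · set z' := S (c z) z with hz'
    have hz'M : z' ∈ M := hcM z
    refine ⟨{n | S n z' ∈ M}, ?_, ?_, ?_⟩
    · intro n hn hn0
      by_contra h
      push Not at h
      exact hMs z' hz'M n (mem_box.2 fun i => (h i).le) hn0 hn
    -- The position `n` is strictly nearer to `0` than to any other centre, so its choice is forced.
    · intro n hn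
      set c' := c (S n z') with hc'
      have h1 : S (c' + n) z' ∈ M := by
        rw [hS.map_add]; exact hcM _
      have h2 : sq c' ≤ sq n := by
        rw [← hsqneg n]
        refine hcmin _ _ ?_
        rw [action_neg_cancel hS]
        exact hz'M
      have h3 : c' + n = 0 := by
        by_contra h0
        have h4 := hn _ h1 h0
        have h5 := hexp n (c' + n)
        rw [add_sub_cancel_right] at h5
        simp only [sq] at h2 h5
        linarith
      have h4 : c' = -n := eq_neg_of_add_eq_zero_left h3
      refine Finset.mem_filter.2 ⟨?_, h4⟩
      have := neg_mem_box (hcbox (S n z'))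
      rwa [← hc', h4, neg_neg] at this
    · intro n hn m hm _
      have h1 : c (S n z') = -n := (Finset.mem_filter.1 hn).2
      have h2 := hcmin (S n z') (m - n) (by
        rw [← hS.map_add, sub_add_cancel]; exact hm)
      rw [h1, hsqneg, hexp] at h2
      simp only [sq] at h2
      linarith

end Dynamics

/-! ### Gluing the tiles -/

/-- The per-tile maps glue along the tiling of `Z` to a single continuous map on `X`. The value at
`x` is read off from the tile containing `0` in the tiling of `π x`, based at its centre. -/
lemma exists_glued_map {k D : ℕ} {X : Type*} [MetricSpace X]
    {T : (Fin k → ℤ) → X → X} (hT : IsZkAction T)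
    {Z : Type*} [MetricSpace Z] {S : (Fin k → ℤ) → Z → Z} (hS : IsZkAction S)
    {π : X → Z} (hπcont : Continuous π)
    (hπequiv : ∀ (g : Fin k → ℤ) (x : X), π (T g x) = S g (π x))
    {f : X → Fin D → ℝ} {ε η : ℝ}
    (c : Z → Fin k → ℤ) (W : Z → Finset (Fin k → ℤ))
    (hcloc : ∀ z, ∀ᶠ y in 𝓝 z, c y = c z) (hWloc : ∀ z, ∀ᶠ y in 𝓝 z, W y = W z)
    (hcW : ∀ z, -c z ∈ W (S (c z) z)) (hWc : ∀ z, ∀ n ∈ W z, c (S n z) = -n)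
    (htile : ∀ z, ∃ G : X → W (S (c z) z) → Fin D → ℝ, Continuous G ∧
      (∀ x n, dist (G x n) (f (T n x)) < η) ∧
      ∀ x y, G x = G y → ∀ n ∈ W (S (c z) z), dist (T n x) (T n y) < ε) :
    ∃ g : X → Fin D → ℝ, Continuous g ∧ (∀ x, dist (g x) (f x) < η) ∧
      ∀ x y, (∀ n, g (T n x) = g (T n y)) → π x = π y → dist x y < ε := by
  classical
  let Q : Finset (Fin k → ℤ) → (X → (Fin k → ℤ) → Fin D → ℝ) → Prop := fun V G =>
    (∀ n ∈ V, Continuous fun x => G x n) ∧ (∀ x, ∀ n ∈ V, dist (G x n) (f (T n x)) < η) ∧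
      ∀ x y, (∀ n ∈ V, G x n = G y n) → ∀ n ∈ V, dist (T n x) (T n y) < ε
  have hQ : ∀ z, ∃ G, Q (W (S (c z) z)) G := by
    intro z
    obtain ⟨G, hG, hGd, hGi⟩ := htile z
    refine ⟨fun x n => if h : n ∈ W (S (c z) z) then G x ⟨n, h⟩ else 0, ?_, ?_, ?_⟩
    · intro n hn
      simp only [hn, dite_true]
      exact (continuous_apply _).comp hG
    · intro x n hn
      simp only [hn, dite_true]
      exact hGd x ⟨n, hn⟩
    · intro x y hxy
      refine hGi x y (funext fun n => ?_)
      have := hxy n n.2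
      simpa only [n.2, dite_true] using this
  -- The tile map is chosen as a function of the shape alone, so that the points of one
  -- tile use the same map.
  have hch : ∀ V, ∃ G, (∃ G', Q V G') → Q V G := by
    intro V
    by_cases h : ∃ G', Q V G'
    · exact ⟨h.choose, fun _ => h.choose_spec⟩
    · exact ⟨fun _ _ => 0, fun h' => absurd h' h⟩
  choose Gc hGc using hch
  have hGz : ∀ z, Q (W (S (c z) z)) (Gc (W (S (c z) z))) := fun z => hGc _ (hQ z)
  refine ⟨fun x => Gc (W (S (c (π x)) (π x))) (T (c (π x)) x) (-c (π x)), ?_, ?_, ?_⟩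
  · rw [continuous_iff_continuousAt]
    intro x₀
    set z₀ := π x₀ with hz₀
    have h1 : ∀ᶠ x in 𝓝 x₀, c (π x) = c z₀ := hπcont.continuousAt.eventually (hcloc z₀)
    have h2 : ∀ᶠ x in 𝓝 x₀, W (S (c z₀) (π x)) = W (S (c z₀) z₀) :=
      ((hS.cont (c z₀)).comp hπcont).continuousAt.eventually (hWloc (S (c z₀) z₀))
    have h3 : Continuous fun x => Gc (W (S (c z₀) z₀)) (T (c z₀) x) (-c z₀) :=
      ((hGz z₀).1 _ (hcW z₀)).comp (hT.cont (c z₀))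
    refine h3.continuousAt.congr ?_
    filter_upwards [h1, h2] with x hx1 hx2
    rw [hx1, hx2]
  · intro x
    have := (hGz (π x)).2.1 (T (c (π x)) x) _ (hcW (π x))
    rwa [action_neg_cancel hT] at this
  · intro x y hxy hπ
    have h := (hGz (π x)).2.2 (T (c (π x)) x) (T (c (π x)) y) ?_ _ (hcW (π x))
    · rwa [action_neg_cancel hT, action_neg_cancel hT] at h
    · intro n hn
      have h1 := hxy (n + c (π x))
      simp only [hT.map_add, hπequiv, ← hπ, hWc _ n hn, neg_neg, action_neg_cancel hT,
        action_neg_cancel hS] at h1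
      exact h1

end ZkEmb

/-- **Proposition.** Let `π : X → Z` be a factor map onto an aperiodic
zero-dimensional `ℤ^k`-system, with `mdim(X) < D/2`. Then every continuous
`f : X → [0,1]^D` can be `δ`-perturbed to a continuous `g` such that
`(I_g, π)` is a `δ`-embedding with respect to `d`. -/
theorem stmt_5 (k D : ℕ) (hk : 1 ≤ k) (hD : 1 ≤ D)
    (X : Type*) [MetricSpace X] [CompactSpace X]
    (T : (Fin k → ℤ) → X → X) (hT : IsZkAction T)
    (Z : Type*) [MetricSpace Z] [CompactSpace Z]
    (S : (Fin k → ℤ) → Z → Z) (hS : IsZkAction S)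
    (hzerodim : ∀ (z : Z) (U : Set Z), IsOpen U → z ∈ U →
      ∃ W : Set Z, IsClopen W ∧ z ∈ W ∧ W ⊆ U)
    (hfree : ∀ (z : Z) (g : Fin k → ℤ), g ≠ 0 → S g z ≠ z)
    (π : X → Z) (hπcont : Continuous π) (hπsurj : Function.Surjective π)
    (hπequiv : ∀ (g : Fin k → ℤ) (x : X), π (T g x) = S g (π x))
    (hmdim : mdim X T < (D : ℝ≥0∞) / 2)
    (f : X → EuclideanSpace ℝ (Fin D)) (hfcont : Continuous f)
    (hfrange : ∀ (x : X) (i : Fin D), f x i ∈ Set.Icc (0 : ℝ) 1)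
    (δ : ℝ) (hδ : 0 < δ) :
    ∃ g : X → EuclideanSpace ℝ (Fin D), Continuous g ∧
      (∀ (x : X) (i : Fin D), g x i ∈ Set.Icc (0 : ℝ) 1) ∧
      (∀ x : X, dist (f x) (g x) < δ) ∧
      ∀ x y : X, (∀ n : Fin k → ℤ, g (T n x) = g (T n y)) → π x = π y →
        dist x y < δ := by
  obtain ⟨η', hη', hη'δ⟩ : ∃ η' > 0, ∀ u v : EuclideanSpace ℝ (Fin D),
      (∀ i, |u i - v i| < η') → dist u v < δ := by
    have hc : ContinuousAt (fun v : Fin D → ℝ => WithLp.toLp 2 v) 0 :=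
      (PiLp.continuous_toLp 2 _).continuousAt
    obtain ⟨η', h, hη'⟩ := Metric.continuousAt_iff.1 hc δ hδ
    refine ⟨η', h, fun u v huv => ?_⟩
    have h1 := hη' (x := WithLp.ofLp (u - v)) (by
      rw [dist_zero_right, pi_norm_lt_iff h]
      exact huv)
    rw [WithLp.toLp_ofLp, WithLp.toLp_zero, dist_zero_right] at h1
    rwa [dist_eq_norm]
  set η : ℝ := η' / 5 with hηdef
  have hη : 0 < η := by positivity
  let f' : X → Fin D → ℝ := fun x => WithLp.ofLp (f x)
  have hf' : Continuous f' := (PiLp.continuous_ofLp 2 _).comp hfcont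
  obtain ⟨ε, hε, hεδ, hfε⟩ : ∃ ε > 0, ε ≤ δ ∧ ∀ x y, dist x y < ε → dist (f' x) (f' y) < η := by
    obtain ⟨ε, hε, h⟩ := Metric.uniformContinuous_iff.1
      (CompactSpace.uniformContinuous_of_continuous hf') η hη
    exact ⟨min ε δ, lt_min hε hδ, min_le_right _ _,
      fun x y hxy => h (hxy.trans_le (min_le_left _ _))⟩
  obtain ⟨N, w, m, φ, ι, hι, a, hN, hw, hφ, ha, hcov, hφε⟩ :=
    ZkEmb.exists_block_embedding hT hmdim hε
  obtain ⟨q, P, -, ψ, hψ, hψε⟩ := ZkEmb.exists_embedding_complex (X := X) hε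
  let ψ' : X → Fin q → ℝ := fun x => WithLp.ofLp (ψ x : EuclideanSpace ℝ (Fin q))
  have hψ' : Continuous ψ' := (PiLp.continuous_ofLp 2 _).comp (continuous_subtype_val.comp hψ)
  have hψ'ε : ∀ x y, ψ' x = ψ' y → dist x y < ε := fun x y h =>
    hψε x y (Subtype.ext (WithLp.ofLp_injective 2 h))
  obtain ⟨r, -, hr⟩ := ZkEmb.voronoi_core k ((2 * q + 1) * N ^ k) N
  obtain ⟨c, W, hcloc, hWloc, hcW, hWc, hC⟩ := ZkEmb.exists_voronoi_tiling hS hzerodim hfree r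
  obtain ⟨g₀, hg₀, hg₀d, hg₀i⟩ := ZkEmb.exists_glued_map (f := f') (ε := ε) (η := 2 * η) hT hS hπcont
    hπequiv c W hcloc hWloc hcW hWc (fun z => by
      obtain ⟨C, hC1, hC2, hC3⟩ := hC z
      obtain ⟨A, hA, hAc⟩ := hr C hC1 _ hC2 hC3
      obtain ⟨J, B, hJB, hcard⟩ := ZkEmb.exists_cube_packing hN hw _ A ⟨_, hcW z⟩ hA hAc
      exact ZkEmb.exists_tile_map hT hη hφ ha hcov hφε hψ' hψ'ε hf' hfε _ J B hJB hcard)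
  -- `g₀` takes values in `(-2η, 1 + 2η)^D`; an affine contraction brings it back to the unit cube.
  have hden : 0 < 1 + 4 * η := by positivity
  have hpt : ∀ x i, |g₀ x i - f x i| < 2 * η := fun x i =>
    (Real.dist_eq _ _).symm.le.trans_lt ((dist_le_pi_dist (g₀ x) (f' x) i).trans_lt (hg₀d x))
  have hrange : ∀ x i, (g₀ x i + 2 * η) / (1 + 4 * η) ∈ Set.Icc (0 : ℝ) 1 := by
    intro x i
    have h1 := abs_lt.1 (hpt x i)
    have h2 := hfrange x i
    exact ⟨div_nonneg (by linarith [h2.1]) hden.le, (div_le_one hden).2 (by linarith [h2.2])⟩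
  refine ⟨fun x => WithLp.toLp 2 fun i => (g₀ x i + 2 * η) / (1 + 4 * η), ?_, hrange, ?_, ?_⟩
  · refine (PiLp.continuous_toLp 2 _).comp (continuous_pi fun i => ?_)
    exact (((continuous_apply i).comp hg₀).add continuous_const).div_const _
  · intro x
    refine hη'δ _ _ fun i => ?_
    have h1 := abs_lt.1 (hpt x i)
    have h2 := hrange x i
    have h3 : (g₀ x i + 2 * η) / (1 + 4 * η) * (1 + 4 * η) = g₀ x i + 2 * η :=
      div_mul_cancel₀ _ hden.ne'
    show |f x i - (g₀ x i + 2 * η) / (1 + 4 * η)| < η'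
    set t := (g₀ x i + 2 * η) / (1 + 4 * η)
    have h4 : 0 ≤ t * η := mul_nonneg h2.1 hη.le
    have h5 : t * η ≤ η := mul_le_of_le_one_left hη.le h2.2
    rw [abs_lt]
    constructor <;> nlinarith
  · intro x y hxy hπ
    refine (hg₀i x y (fun n => funext fun i => ?_) hπ).trans_le hεδ
    have h1 := congrFun (WithLp.toLp_injective 2 (hxy n)) i
    have h2 := (div_left_inj' hden.ne').1 h1
    linarith
end

section
/- Let k ≥ 1 and let (Z,S) be a zero-dimensional aperiodic ℤ^k-system. Then for any L > 0 there exists a clopen subset U ⊆ Z such that Z = ⋃_{n∈ℤ^k, |n|<L} S^n U and U ∩ S^n U = ∅ for all n ∈ ℤ^k with 0 < |n| < L, where |·| denotes the Euclidean norm on ℤ^k. -/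
/-!
The set `F` of lattice points of norm less than `L` is finite, symmetric and contains `0`.
By freeness and continuity every point `z` has a clopen neighbourhood `W z` disjoint from its
translates by the nonzero elements of `F` (`exists_clopen_nhd_disjoint`). By compactness finitely
many `W z` cover the space, and they are processed greedily (`exists_marker_finset`): having a
separated clopen set `U` whose `F`-translates cover the sets treated so far, replace it by
`U ∪ (W z \ ⋃ n ∈ F, S n U)`. This stays clopen and separated, since the new points avoid all
`F`-translates of `U` and `F = -F`, and its `F`-translates cover `W z` as well because `0 ∈ F`.
-/

open Set Filter
open scoped NNReal ENNReal Topology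

/-- The Euclidean norm of a lattice point `n ∈ ℤ^k`. -/
noncomputable def znorm {k : ℕ} (n : Fin k → ℤ) : ℝ :=
  Real.sqrt (∑ i, ((n i : ℝ)) ^ 2)

theorem znorm_zero {k : ℕ} : znorm (0 : Fin k → ℤ) = 0 := by
  simp [znorm]

theorem znorm_neg {k : ℕ} (n : Fin k → ℤ) : znorm (-n) = znorm n := by
  simp [znorm]

theorem abs_le_znorm {k : ℕ} (n : Fin k → ℤ) (i : Fin k) : |(n i : ℝ)| ≤ znorm n := by
  apply Real.abs_le_sqrt
  exact Finset.single_le_sum (f := fun j => ((n j : ℝ)) ^ 2)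
    (fun j _ => sq_nonneg _) (Finset.mem_univ i)

theorem finite_znorm_lt (k : ℕ) (L : ℝ) : {n : Fin k → ℤ | znorm n < L}.Finite := by
  refine (Set.finite_Icc (fun _ : Fin k => -⌈L⌉) (fun _ => ⌈L⌉)).subset ?_
  intro n hn
  have key : ∀ i, |n i| ≤ ⌈L⌉ := by
    intro i
    have h : (|n i| : ℝ) ≤ (⌈L⌉ : ℝ) :=
      ((abs_le_znorm n i).trans (le_of_lt hn)).trans (Int.le_ceil L)
    exact_mod_cast h
  exact ⟨fun i => (abs_le.mp (key i)).1, fun i => (abs_le.mp (key i)).2⟩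

theorem IsZkAction.mem_image_iff {k : ℕ} {X : Type*} [TopologicalSpace X]
    {T : (Fin k → ℤ) → X → X} (hT : IsZkAction T) (n : Fin k → ℤ) (U : Set X) (x : X) :
    x ∈ T n '' U ↔ T (-n) x ∈ U := by
  constructor
  · rintro ⟨y, hy, rfl⟩
    rwa [← hT.map_add, neg_add_cancel, hT.map_zero]
  · intro h
    exact ⟨T (-n) x, h, by rw [← hT.map_add, add_neg_cancel, hT.map_zero]⟩

/-- In a zero-dimensional space with a free action, every point has a clopen neighbourhood none of
whose points returns to it under a nonzero element of a given finite set `F`. -/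
theorem exists_clopen_nhd_disjoint {k : ℕ} {Z : Type*} [TopologicalSpace Z] [T2Space Z]
    {S : (Fin k → ℤ) → Z → Z} (hS : IsZkAction S)
    (hzerodim : ∀ (z : Z) (U : Set Z), IsOpen U → z ∈ U →
      ∃ W : Set Z, IsClopen W ∧ z ∈ W ∧ W ⊆ U)
    (hfree : ∀ (z : Z) (g : Fin k → ℤ), g ≠ 0 → S g z ≠ z)
    {F : Set (Fin k → ℤ)} (hF : F.Finite) (z : Z) :
    ∃ W : Set Z, IsClopen W ∧ z ∈ W ∧ ∀ n ∈ F, n ≠ 0 → ∀ x ∈ W, S n x ∉ W := by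
  have h1 : ∀ n : Fin k → ℤ, ∃ V : Set Z, IsOpen V ∧ z ∈ V ∧
      (n ≠ 0 → ∀ x ∈ V, S n x ∉ V) := by
    intro n
    by_cases hn : n = 0
    · exact ⟨Set.univ, isOpen_univ, Set.mem_univ z, fun h => absurd hn h⟩
    · obtain ⟨A, B, hA, hB, hzA, hzB, hAB⟩ := t2_separation (hfree z n hn)
      refine ⟨B ∩ S n ⁻¹' A, hB.inter (hA.preimage (hS.cont n)), ⟨hzB, hzA⟩, ?_⟩
      rintro - x ⟨-, hxA⟩ ⟨hxB, -⟩
      exact Set.disjoint_left.mp hAB hxA hxB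
  choose V hVo hzV hV using h1
  obtain ⟨W, hW, hzW, hWV⟩ := hzerodim z (⋂ n ∈ F, V n)
    (hF.isOpen_biInter fun n _ => hVo n) (Set.mem_iInter₂.mpr fun n _ => hzV n)
  refine ⟨W, hW, hzW, fun n hn hn0 x hx hSx => ?_⟩
  exact hV n hn0 x (Set.mem_iInter₂.mp (hWV hx) n hn) (Set.mem_iInter₂.mp (hWV hSx) n hn)

/-- Greedy construction: finitely many separated clopen sets can be covered by the `F`-translates of
a single separated clopen set. -/
theorem exists_marker_finset {k : ℕ} {Z : Type*} [TopologicalSpace Z]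
    {S : (Fin k → ℤ) → Z → Z} (hS : IsZkAction S)
    {F : Set (Fin k → ℤ)} (hF : F.Finite) (h0 : 0 ∈ F) (hneg : ∀ n ∈ F, -n ∈ F)
    {ι : Type*} (W : ι → Set Z) (hW : ∀ i, IsClopen (W i))
    (hWsep : ∀ i, ∀ n ∈ F, n ≠ 0 → ∀ x ∈ W i, S n x ∉ W i) (t : Finset ι) :
    ∃ U : Set Z, IsClopen U ∧ (∀ n ∈ F, n ≠ 0 → ∀ x ∈ U, S n x ∉ U) ∧
      ∀ i ∈ t, ∀ x ∈ W i, ∃ n ∈ F, S n x ∈ U := by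
  classical
  induction t using Finset.induction_on with
  | empty => exact ⟨∅, isClopen_empty, by simp, by simp⟩
  | insert a t _ ih =>
    obtain ⟨U, hU, hsep, hcov⟩ := ih
    have hback : ∀ n x, S (-n) (S n x) = x := fun n x => by
      rw [← hS.map_add, neg_add_cancel, hS.map_zero]
    refine ⟨U ∪ (W a \ ⋃ n ∈ F, S n ⁻¹' U),
      hU.union ((hW a).diff (hF.isClopen_biUnion fun n _ => hU.preimage (hS.cont n))), ?_, ?_⟩
    · rintro n hn hn0 x (hx | ⟨hxW, hx⟩) (hy | ⟨hyW, hy⟩)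
      · exact hsep n hn hn0 x hx hy
      -- `S n x` is a new point, but `S (-n)` moves it into `U`, and `-n ∈ F`.
      · exact hy (Set.mem_iUnion₂.mpr ⟨-n, hneg n hn, by
          rw [Set.mem_preimage, hback]; exact hx⟩)
      · exact hx (Set.mem_iUnion₂.mpr ⟨n, hn, hy⟩)
      · exact hWsep a n hn hn0 x hxW hyW
    · intro i hi x hx
      rcases Finset.mem_insert.mp hi with rfl | hi
      · by_cases h : x ∈ ⋃ n ∈ F, S n ⁻¹' U
        · obtain ⟨n, hn, hxn⟩ := Set.mem_iUnion₂.mp h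
          exact ⟨n, hn, Or.inl hxn⟩
        · exact ⟨0, h0, by rw [hS.map_zero]; exact Or.inr ⟨hx, h⟩⟩
      · obtain ⟨n, hn, hxn⟩ := hcov i hi x hx
        exact ⟨n, hn, Or.inl hxn⟩

/-- **Lemma (clopen markers).** In a zero-dimensional aperiodic `ℤ^k`-system,
for any `L > 0` there is a clopen `U` with `Z = ⋃_{|n|<L} S^n U` and
`U ∩ S^n U = ∅` for all `0 < |n| < L`. -/
theorem stmt_7 (k : ℕ) (hk : 1 ≤ k)
    (Z : Type*) [MetricSpace Z] [CompactSpace Z]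
    (S : (Fin k → ℤ) → Z → Z) (hS : IsZkAction S)
    (hzerodim : ∀ (z : Z) (U : Set Z), IsOpen U → z ∈ U →
      ∃ W : Set Z, IsClopen W ∧ z ∈ W ∧ W ⊆ U)
    (hfree : ∀ (z : Z) (g : Fin k → ℤ), g ≠ 0 → S g z ≠ z)
    (L : ℝ) (hL : 0 < L) :
    ∃ U : Set Z, IsClopen U ∧
      (⋃ n ∈ {n : Fin k → ℤ | znorm n < L}, S n '' U) = Set.univ ∧
      ∀ n : Fin k → ℤ, n ≠ 0 → znorm n < L → U ∩ S n '' U = ∅ := by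
  have hF := finite_znorm_lt k L
  have hneg : ∀ n ∈ {n : Fin k → ℤ | znorm n < L}, -n ∈ {n : Fin k → ℤ | znorm n < L} :=
    fun n hn => (znorm_neg n).trans_lt hn
  choose W hW hzW hWsep using exists_clopen_nhd_disjoint hS hzerodim hfree hF
  obtain ⟨t, ht⟩ := isCompact_univ.elim_finite_subcover W (fun z => (hW z).isOpen)
    (fun z _ => Set.mem_iUnion.mpr ⟨z, hzW z⟩)
  obtain ⟨U, hU, hsep, hcov⟩ :=
    exists_marker_finset hS hF (znorm_zero.trans_lt hL) hneg W hW hWsep t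
  refine ⟨U, hU, Set.eq_univ_of_forall fun x => ?_, fun n hn0 hn => ?_⟩
  · obtain ⟨z, hz, hx⟩ := Set.mem_iUnion₂.mp (ht (Set.mem_univ x))
    obtain ⟨n, hn, hxn⟩ := hcov z hz x hx
    exact Set.mem_iUnion₂.mpr ⟨-n, hneg n hn, (hS.mem_image_iff _ _ _).mpr (by rwa [neg_neg])⟩
  · refine Set.eq_empty_of_forall_notMem ?_
    rintro _ ⟨hy, x, hx, rfl⟩
    exact hsep n hn hn0 x hx hy
end

section
/- Let k ≥ 1. For every R > 0 there exists L_0 > 0 such that for every L ≥ L_0 the following holds: if C ⊆ ℤ^k is a set any two distinct points of which are at Euclidean distance ≥ L, if n ∈ C, and if the Voronoi cell V = {u ∈ ℝ^k : |u − n| ≤ |u − m| for all m ∈ C} is bounded, then |∂_R^ℤ(V ∩ ℤ^k)| < (1/R)·|V ∩ ℤ^k|. -/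
/-!
Write `c` for the centre, `K = V - c`, and `r = L / 2`. The set `K` is convex, bounded and closed,
and contains the ball of radius `r` about `0`, because the centres are `L`-separated. Convexity gives
`a • K + ε • K = (a + ε) • K`, so a point at distance at most `ε r` from `a • K` lies in
`(a + ε) • K` (`mem_smul_of_dist_le`).

Counting lattice points is measuring unions of unit cubes: the number of elements of
`A ⊆ ℤ^k` is the volume of the set of `x` whose coordinatewise floor lies in `A`
(`volume_real_floorPt_preimage`). Unit cubes have bounded diameter (`dist_floorPt_le`), so with
`ε = (R + √k) / r` the cubes based at points of `∂_R V` lie in `(1 + ε) • K \ (1 - ε) • K` (up to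
translation by `c`), while the cubes based at points of `V` cover `(1 - ε) • K`. Hence the ratio of
the two cardinalities is at most `((1 + ε)^k - (1 - ε)^k) / (1 - ε)^k`, which tends to `0` as
`L → ∞`.
-/

open Set

/-- The canonical embedding `ℤ^k → ℝ^k` (Euclidean space). -/
noncomputable def zToR {k : ℕ} (n : Fin k → ℤ) : EuclideanSpace ℝ (Fin k) :=
  (EuclideanSpace.equiv (Fin k) ℝ).symm (fun i => (n i : ℝ))

/-- `∂_R^ℤ Ω`: lattice points within distance `R` both of `Ω` and of its
complement. -/
def zBoundary {k : ℕ} (R : ℝ) (Ω : Set (Fin k → ℤ)) : Set (Fin k → ℤ) :=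
  {p | (∃ m ∈ Ω, dist (zToR p) (zToR m) ≤ R) ∧
       (∃ m', m' ∉ Ω ∧ dist (zToR p) (zToR m') ≤ R)}

/-- The (real) Voronoi cell of `n` with respect to the set of centers `C`. -/
def voronoiCell {k : ℕ} (C : Set (Fin k → ℤ)) (n : Fin k → ℤ) :
    Set (EuclideanSpace ℝ (Fin k)) :=
  {u | ∀ m ∈ C, dist u (zToR n) ≤ dist u (zToR m)}

/-- The lattice points of the Voronoi cell. -/
def voronoiCellZ {k : ℕ} (C : Set (Fin k → ℤ)) (n : Fin k → ℤ) :
    Set (Fin k → ℤ) :=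
  {m | zToR m ∈ voronoiCell C n}

open MeasureTheory Pointwise

/-- The coordinatewise floor `ℝ^k → ℤ^k`; its fibre over `p` is the half-open unit cube at `p`. -/
noncomputable def floorPt {k : ℕ} (x : EuclideanSpace ℝ (Fin k)) : Fin k → ℤ := fun i => ⌊x i⌋

lemma zToR_apply {k : ℕ} (n : Fin k → ℤ) (i : Fin k) : zToR n i = (n i : ℝ) := rfl

lemma measurable_floorPt {k : ℕ} : Measurable (floorPt (k := k)) := by
  refine measurable_pi_iff.2 fun i => ?_
  exact Int.measurable_floor.comp (by fun_prop)

lemma dist_floorPt_le {k : ℕ} (x : EuclideanSpace ℝ (Fin k)) :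
    dist x (zToR (floorPt x)) ≤ √k := by
  rw [EuclideanSpace.dist_eq]
  apply Real.sqrt_le_sqrt
  calc ∑ i, dist (x i) (zToR (floorPt x) i) ^ 2 ≤ ∑ _i : Fin k, (1 : ℝ) := by
        refine Finset.sum_le_sum fun i _ => ?_
        rw [zToR_apply, Real.dist_eq, sq_abs]
        have h1 := Int.floor_le (x i)
        have h2 := Int.lt_floor_add_one (x i)
        simp only [floorPt]
        nlinarith
    _ = k := by simp

lemma volume_floorPt_preimage_singleton {k : ℕ} (p : Fin k → ℤ) :
    volume (floorPt ⁻¹' {p}) = 1 := by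
  have h : floorPt ⁻¹' {p} = (WithLp.ofLp : EuclideanSpace ℝ (Fin k) → (Fin k → ℝ)) ⁻¹'
      (Set.univ.pi fun i => Set.Ico (p i : ℝ) (p i + 1)) := by
    ext x
    simp [floorPt, funext_iff, Int.floor_eq_iff]
  rw [h, (PiLp.volume_preserving_ofLp (Fin k)).measure_preimage
    (MeasurableSet.univ_pi fun i => measurableSet_Ico).nullMeasurableSet]
  simp [Real.volume_pi_Ico]

lemma map_floorPt_volume {k : ℕ} :
    (volume : Measure (EuclideanSpace ℝ (Fin k))).map floorPt = Measure.count := by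
  refine Measure.ext_of_singleton fun p => ?_
  rw [Measure.map_apply measurable_floorPt (measurableSet_singleton p),
    volume_floorPt_preimage_singleton, Measure.count_singleton]

/-- Both sides are `0` when `A` is infinite. -/
lemma volume_real_floorPt_preimage {k : ℕ} (A : Set (Fin k → ℤ)) :
    volume.real (floorPt ⁻¹' A) = (A.ncard : ℝ) := by
  rw [Measure.real, ← Measure.map_apply measurable_floorPt A.to_countable.measurableSet,
    map_floorPt_volume, Measure.count_apply A.to_countable.measurableSet]
  by_cases hA : A.Finite
  · rw [← hA.cast_ncard_eq]; simp
  · have hA' : A.Infinite := hA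
    simp [hA'.encard_eq, hA'.ncard]

section ConvexBody

variable {E : Type*} [NormedAddCommGroup E] [NormedSpace ℝ E]

lemma mem_smul_of_dist_le {K : Set E} (hK : Convex ℝ K) {r a ε : ℝ} (hr : 0 < r)
    (hball : Metric.closedBall 0 r ⊆ K) (ha : 0 ≤ a) (hε : 0 ≤ ε) {x y : E} (hx : x ∈ a • K)
    (hxy : dist y x ≤ ε * r) : y ∈ (a + ε) • K := by
  rw [hK.add_smul ha hε]
  refine Set.mem_add.2 ⟨x, hx, y - x, ?_, by abel⟩
  refine Set.smul_set_mono hball ?_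
  rw [smul_closedBall _ _ hr.le, smul_zero, mem_closedBall_zero_iff, Real.norm_of_nonneg hε,
    ← dist_eq_norm]
  exact hxy

end ConvexBody

lemma convex_voronoiCell {k : ℕ} (C : Set (Fin k → ℤ)) (n : Fin k → ℤ) :
    Convex ℝ (voronoiCell C n) := by
  have h : voronoiCell C n = ⋂ m ∈ C, {u | inner ℝ (zToR m - zToR n) u ≤
      (‖zToR m‖ ^ 2 - ‖zToR n‖ ^ 2) / 2} := by
    ext u
    simp only [voronoiCell, Set.mem_ofPred_eq, Set.mem_iInter]
    refine forall₂_congr fun m _ => ?_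
    rw [dist_eq_norm, dist_eq_norm, ← sq_le_sq₀ (norm_nonneg _) (norm_nonneg _),
      norm_sub_sq_real, norm_sub_sq_real, inner_sub_left, real_inner_comm u, real_inner_comm u]
    constructor <;> intro h <;> linarith
  rw [h]
  exact convex_iInter₂ fun m _ => convex_halfSpace_le (innerₗ _ _).isLinear _

lemma isClosed_voronoiCell {k : ℕ} (C : Set (Fin k → ℤ)) (n : Fin k → ℤ) :
    IsClosed (voronoiCell C n) := by
  have h : voronoiCell C n = ⋂ m ∈ C, {u | dist u (zToR n) ≤ dist u (zToR m)} := by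
    ext u; simp [voronoiCell]
  rw [h]
  exact isClosed_biInter fun m _ => isClosed_le (by fun_prop) (by fun_prop)

lemma closedBall_subset_voronoiCell {k : ℕ} {C : Set (Fin k → ℤ)} {n : Fin k → ℤ} {L : ℝ}
    (hC : ∀ m ∈ C, ∀ m' ∈ C, m ≠ m' → L ≤ dist (zToR m) (zToR m')) (hn : n ∈ C) :
    Metric.closedBall (zToR n) (L / 2) ⊆ voronoiCell C n := by
  intro u hu m hm
  rw [Metric.mem_closedBall] at hu
  by_cases h : n = m
  · rw [h]
  · have h1 := hC n hn m hm h
    have h2 := dist_triangle_left (zToR n) (zToR m) u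
    linarith

lemma exists_pos_forall_pow_bound (k : ℕ) (R : ℝ) :
    ∃ δ : ℝ, 0 < δ ∧ ∀ ε, 0 ≤ ε → ε < δ →
      ε < 1 ∧ R * ((1 + ε) ^ k - (1 - ε) ^ k) < (1 - ε) ^ k := by
  have h1 : ∀ᶠ ε : ℝ in nhds 0, ε < 1 := gt_mem_nhds one_pos
  have h2 : ∀ᶠ ε : ℝ in nhds 0, R * ((1 + ε) ^ k - (1 - ε) ^ k) < (1 - ε) ^ k := by
    refine ContinuousAt.eventually_lt (by fun_prop) (by fun_prop) ?_
    simp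
  obtain ⟨δ, hδ, h⟩ := Metric.eventually_nhds_iff.1 (h1.and h2)
  refine ⟨δ, hδ, fun ε h0 hε => h ?_⟩
  rwa [Real.dist_eq, sub_zero, abs_of_nonneg h0]

/-- **Lemma (Voronoi cells have small boundary).** For every `R > 0` there is
`L₀` such that for `L ≥ L₀`, any bounded Voronoi cell of an `L`-separated set
of centers `C ⊆ ℤ^k` satisfies `|∂_R^ℤ(V ∩ ℤ^k)| < |V ∩ ℤ^k| / R`. -/
theorem stmt_8 (k : ℕ) (hk : 1 ≤ k) (R : ℝ) (hR : 0 < R) :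
    ∃ L₀ : ℝ, 0 < L₀ ∧ ∀ L : ℝ, L₀ ≤ L →
      ∀ C : Set (Fin k → ℤ),
        (∀ m ∈ C, ∀ m' ∈ C, m ≠ m' → L ≤ dist (zToR m) (zToR m')) →
        ∀ n ∈ C, Bornology.IsBounded (voronoiCell C n) →
          ((zBoundary R (voronoiCellZ C n)).ncard : ℝ)
            < (1 / R) * ((voronoiCellZ C n).ncard : ℝ) := by
  obtain ⟨δ, hδ, hδε⟩ := exists_pos_forall_pow_bound k R
  have hM : 0 < R + √k := by positivity
  -- `ε = (R + √k) / (L / 2)` is then at most `δ / 2`.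
  refine ⟨4 * (R + √k) / δ, by positivity, fun L hL C hC n hn hbdd => ?_⟩
  have hL0 : 0 < L := lt_of_lt_of_le (by positivity) hL
  have hr : 0 < L / 2 := by positivity
  obtain ⟨ε, hεr⟩ : ∃ ε, ε * (L / 2) = R + √k := ⟨(R + √k) / (L / 2), by field_simp⟩
  have hε0 : 0 < ε := pos_of_mul_pos_left (hεr ▸ hM) hr.le
  have hεδ : ε < δ := by
    rw [div_le_iff₀ hδ] at hL
    by_contra! h
    nlinarith
  obtain ⟨hε1, hεk⟩ := hδε ε hε0.le hεδ
  set V := voronoiCell C n with hV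
  set c := zToR n with hc
  set K : Set (EuclideanSpace ℝ (Fin k)) := (fun x => x + c) ⁻¹' V with hKdef
  have hKconv : Convex ℝ K := (convex_voronoiCell C n).translate_preimage_left c
  have hKclosed : IsClosed K := (isClosed_voronoiCell C n).preimage (by fun_prop)
  have hKball : Metric.closedBall 0 (L / 2) ⊆ K := fun x hx =>
    closedBall_subset_voronoiCell hC hn (by simpa [dist_eq_norm, hc] using hx)
  have hvol : volume K = volume V := measure_preimage_add_right _ _ _
  have hKfin : volume K ≠ ⊤ := hvol ▸ hbdd.measure_lt_top.ne
  have hKpos : 0 < volume.real K := by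
    refine ENNReal.toReal_pos (ne_of_gt ?_) hKfin
    exact (Metric.measure_closedBall_pos volume 0 hr).trans_le (measure_mono hKball)
  -- `S a` is the cell dilated about its centre by the factor `a`.
  set S : ℝ → Set (EuclideanSpace ℝ (Fin k)) := fun a => (fun x => x - c) ⁻¹' (a • K) with hS
  have hSvol : ∀ a, 0 ≤ a → volume.real (S a) = a ^ k * volume.real K := by
    intro a ha
    have : volume (S a) = volume (a • K) := by
      simp only [hS, sub_eq_add_neg]
      exact measure_preimage_add_right _ _ _
    rw [Measure.real, this, Measure.addHaar_smul, finrank_euclideanSpace_fin, ENNReal.toReal_mul,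
      abs_of_nonneg (by positivity), ENNReal.toReal_ofReal (by positivity), Measure.real]
  have hSfin : ∀ a, volume (S a) ≠ ⊤ := by
    intro a
    have : volume (S a) = volume (a • K) := by
      simp only [hS, sub_eq_add_neg]
      exact measure_preimage_add_right _ _ _
    rw [this, Measure.addHaar_smul]
    exact ENNReal.mul_ne_top ENNReal.ofReal_ne_top hKfin
  have hSmeas : ∀ a, 0 < a → MeasurableSet (S a) := by
    intro a ha
    exact ((hKclosed.smul_of_ne_zero ha.ne').preimage (by fun_prop)).measurableSet
  have hS1 : ∀ x, x ∈ S 1 ↔ x ∈ V := by intro x; simp [hS, hKdef]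
  have hSdist : ∀ a b x y, 0 ≤ a → a + ε = b → x ∈ S a → dist y x ≤ R + √k → y ∈ S b := by
    intro a b x y ha hab hx hxy
    subst hab
    refine mem_smul_of_dist_le hKconv hr hKball ha hε0.le hx ?_
    rw [hεr, dist_sub_right]
    exact hxy
  have hsub : S (1 - ε) ⊆ S (1 + ε) := by
    intro x hx
    have h1 := hSdist (1 - ε) 1 x x (by linarith) (by ring) hx (by simpa using hM.le)
    exact hSdist 1 (1 + ε) x x (by linarith) rfl h1 (by simpa using hM.le)
  have hB : floorPt ⁻¹' (zBoundary R (voronoiCellZ C n)) ⊆ S (1 + ε) \ S (1 - ε) := by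
    rintro x ⟨⟨m, hm, hdm⟩, m', hm', hdm'⟩
    have hx := dist_floorPt_le x
    refine ⟨hSdist 1 _ (zToR m) x zero_le_one rfl ((hS1 _).2 hm) ?_, fun hx' => hm' ?_⟩
    · linarith [dist_triangle x (zToR (floorPt x)) (zToR m)]
    · refine (hS1 _).1 (hSdist (1 - ε) 1 x (zToR m') (by linarith) (by ring) hx' ?_)
      rw [dist_comm]
      linarith [dist_triangle x (zToR (floorPt x)) (zToR m')]
  have hA1 : S (1 - ε) ⊆ floorPt ⁻¹' (voronoiCellZ C n) := by
    intro x hx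
    refine (hS1 _).1 (hSdist (1 - ε) 1 x _ (by linarith) (by ring) hx ?_)
    rw [dist_comm]
    linarith [dist_floorPt_le x]
  have hA2 : floorPt ⁻¹' (voronoiCellZ C n) ⊆ S (1 + ε) := by
    intro x hx
    refine hSdist 1 _ (zToR (floorPt x)) x zero_le_one rfl ((hS1 _).2 hx) ?_
    linarith [dist_floorPt_le x]
  rw [← volume_real_floorPt_preimage, ← volume_real_floorPt_preimage]
  have hBvol := measureReal_mono hB (measure_ne_top_of_subset Set.sdiff_subset (hSfin (1 + ε)))
  rw [measureReal_sdiff hsub (hSmeas _ (by linarith)) (hSfin _), hSvol _ (by linarith),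
    hSvol _ (by linarith)] at hBvol
  have hAvol := measureReal_mono hA1 (measure_ne_top_of_subset hA2 (hSfin (1 + ε)))
  rw [hSvol _ (by linarith)] at hAvol
  rw [one_div, inv_mul_eq_div, lt_div_iff₀' hR]
  calc R * volume.real (floorPt ⁻¹' (zBoundary R (voronoiCellZ C n)))
      ≤ R * ((1 + ε) ^ k * volume.real K - (1 - ε) ^ k * volume.real K) := by gcongr
    _ = R * ((1 + ε) ^ k - (1 - ε) ^ k) * volume.real K := by ring
    _ < (1 - ε) ^ k * volume.real K := by gcongr
    _ ≤ _ := hAvol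
end

section
/- Let k ≥ 1 and let (X,T) be a ℤ^k-system with the marker property and mdim(X) = 0. Then the set of continuous functions f: X → ℝ satisfying ocap(f^{−1}(0)) = 0 is a dense G_δ subset of C(X,ℝ) with the uniform norm. -/
/-!
The functions with `ocap (f⁻¹(0)) = 0` form the intersection over `j` of the sets `V j` of those
`f` for which some cube `{0, …, L-1}^k` contains fewer than `L^k / (j + 1)` zeros of `f` along
every orbit. By compactness `V j` is open, so by Baire everything reduces to its density: given
`f`, `η`, `δ`, find `g` within `η` of `f` with fewer than `δ L^k` zeros in such cubes
(`exists_perturbation`).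

*Blocks.* Since `mdim X = 0`, for some `N` there is an `ε`-embedding of `X`, for the metric
`d_{[N]}`, into a complex of dimension `D ≤ δ N^k / 4`. The vector `(f(T^a x))` indexed by `a` in
the block nearly factors through this complex by a smooth map into `ℝ^(N^k)`, and a small generic
translation of a `D`-dimensional smooth image leaves at most `D` zero coordinates at each point
(`exists_block_map`).

*Gluing.* The orbits have to be cut into blocks of size `N` in a continuous and equivariant way.
The marker property gives widely separated markers with continuous penalties; each point selects
the markers of nearly minimal cost `|m|² + lam (T m x)`, and near most points only one marker `P`
is selected, so that the grid `P + N ℤ^k` provides the blocks (`exists_weights`). Elsewhere the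
resulting functions are averaged, which keeps `g` close to `f` but gives no control of zeros.
That these uncontrolled points have small density follows from convexity
(`second_difference_le_of_not_good`, `card_not_good_le`): `|b|²` minus the minimal cost at `T^b x`
is a maximum of affine functions of `b` whose slopes are separated, so it has a large second
difference wherever two of them compete, while its second differences are nonnegative and have
bounded average. The zeros in the remaining blocks are counted in `card_good_zeros_mul_le`.
-/

open Set Filter
open scoped NNReal ENNReal Topology

/-- Orbit capacity `ocap(A) = lim_{N→∞} N^{-k} sup_{x∈X} Σ_{n∈[N]} 1_A(T^n x)`;
by subadditivity the limit equals the infimum over `N ≥ 1`. -/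
noncomputable def ocap {k : ℕ} {X : Type*} (T : (Fin k → ℤ) → X → X) (A : Set X) : ℝ :=
  ⨅ N : {N : ℕ // 1 ≤ N},
    (⨆ x : X, ∑ a : Fin k → Fin N.1,
      A.indicator (fun _ => (1 : ℝ)) (T (fun i => (a i : ℤ)) x)) / (N.1 : ℝ) ^ k

/-! ### Blocks with few zeros -/

/-- The set whose infimum defines `widim` is nonempty, so the infimum is attained rather than the
junk value `sInf ∅ = 0`. The distances to the points of a finite `ε/2`-net along the block give
an `ε`-embedding into a Euclidean space, and rescaling moves its bounded image into one simplex. -/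
theorem nonempty_widim_set {k : ℕ} {X : Type*} [MetricSpace X] [CompactSpace X]
    {T : (Fin k → ℤ) → X → X} (hT : IsZkAction T) {N : ℕ} (hN : 1 ≤ N) {ε : ℝ} (hε : 0 < ε) :
    {n : ℕ | ∃ (m : ℕ) (P : Geometry.SimplicialComplex ℝ (EuclideanSpace ℝ (Fin m))),
      P.faces.Finite ∧ (∀ s ∈ P.faces, s.card ≤ n + 1) ∧
      ∃ f : X → P.space, IsEpsEmbedding (blockRho T dist N) ε f}.Nonempty := by
  classical
  have : Nonempty (Fin N) := ⟨⟨0, hN⟩⟩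
  obtain ⟨t, -, ht⟩ := finite_cover_balls_of_compact (isCompact_univ (X := X)) (half_pos hε)
  obtain ⟨tfin, htc⟩ := ht
  have : Fintype t := tfin.fintype
  let ι := (Fin k → Fin N) × t
  let e := Fintype.equivFin ι
  let m := Fintype.card ι
  let E := EuclideanSpace ℝ (Fin m)
  let Φ : X → E := fun x => WithLp.toLp 2 fun j =>
    dist (T (fun i => ((e.symm j).1 i : ℤ)) x) ((e.symm j).2 : X)
  have hΦc : Continuous Φ := by
    refine (PiLp.continuous_toLp 2 _).comp (continuous_pi fun j => ?_)
    exact (hT.cont _).dist continuous_const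
  have hΦ : ∀ x y, Φ x = Φ y → blockRho T dist N x y < ε := by
    intro x y hxy
    have key : ∀ a : Fin k → Fin N,
        dist (T (fun i => (a i : ℤ)) x) (T (fun i => (a i : ℤ)) y) < ε := by
      intro a
      have := htc (mem_univ (T (fun i => (a i : ℤ)) x))
      simp only [mem_iUnion] at this
      obtain ⟨z, hz, hzx⟩ := this
      have h2 := congrArg (fun v : E => v (e (a, ⟨z, hz⟩))) hxy
      simp only [Φ, Equiv.symm_apply_apply] at h2
      rw [Metric.mem_ball] at hzx
      calc _ ≤ _ := dist_triangle_right _ _ z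
        _ < ε := by rw [← h2]; linarith
    unfold blockRho
    obtain ⟨a, ha⟩ := exists_eq_ciSup_of_finite
      (f := fun a : Fin k → Fin N => dist (T (fun i => (a i : ℤ)) x) (T (fun i => (a i : ℤ)) y))
    rw [← ha]
    exact key a
  obtain ⟨b⟩ : Nonempty (AffineBasis (Fin (m + 1)) ℝ E) :=
    AffineBasis.exists_affineBasis_of_finiteDimensional (by
      rw [Fintype.card_fin, finrank_euclideanSpace, Fintype.card_fin])
  -- `b` spans a full-dimensional simplex: its faces form `P`, its centroid `c` is interior
  have hcint := b.centroid_mem_interior_convexHull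
  set c := Finset.univ.centroid ℝ b with hc
  obtain ⟨r, hr, hball⟩ := Metric.mem_nhds_iff.1 (mem_interior_iff_mem_nhds.1 hcint)
  obtain ⟨C, hC⟩ := (isCompact_range hΦc).isBounded.exists_norm_le
  let C' := max C 1
  have hC' : 0 < C' := lt_of_lt_of_le one_pos (le_max_right _ _)
  let P : Geometry.SimplicialComplex ℝ E := Geometry.SimplicialComplex.ofErase
    {s : Finset E | (s : Set E) ⊆ range b}
    (fun s hs => (b.ind.range).mono hs)
    (fun s s' hss' hs => (Finset.coe_subset.2 hss').trans hs)
    (by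
      intro s hs s' hs'
      apply subset_of_eq
      rw [← AffineIndependent.convexHull_inter (R := ℝ) (s := s ∪ s')]
      · exact (b.ind.range).mono (by simp only [Finset.coe_union]; exact union_subset hs hs')
      · exact Finset.subset_union_left
      · exact Finset.subset_union_right)
  have hrange : (range b).Finite := finite_range b
  have hPsub : convexHull ℝ (range b) ⊆ P.space := by
    have hmem : hrange.toFinset ∈ P.faces := by
      constructor
      · simp
      · simp only [mem_singleton_iff, ← Finset.nonempty_iff_ne_empty]
        exact ⟨b 0, by simp⟩
    have := P.convexHull_subset_space hmem
    simpa using this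
  refine ⟨m, m, P, ?_, ?_, ?_⟩
  · refine Finite.subset (hrange.finite_subsets.preimage Finset.coe_injective.injOn) ?_
    intro s hs
    exact hs.1
  · intro s hs
    have h1 : s ⊆ Finset.univ.image b := by
      intro v hv
      have := hs.1 hv
      simpa using this
    calc s.card ≤ _ := Finset.card_le_card h1
      _ ≤ _ := Finset.card_image_le
      _ = m + 1 := by simp
  · have hmem : ∀ x, c + (r / (2 * C')) • Φ x ∈ P.space := by
      intro x
      apply hPsub
      apply hball
      have h1 : ‖Φ x‖ ≤ C' := (hC _ (mem_range_self x)).trans (le_max_left _ _)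
      rw [Metric.mem_ball, dist_eq_norm, add_sub_cancel_left, norm_smul, Real.norm_eq_abs,
        abs_of_pos (by positivity)]
      calc r / (2 * C') * ‖Φ x‖ ≤ r / (2 * C') * C' := by gcongr
        _ = r / 2 := by field_simp
        _ < r := by linarith
    refine ⟨fun x => ⟨_, hmem x⟩, ?_, ?_⟩
    · have hcont : Continuous fun x => c + (r / (2 * C')) • Φ x := by fun_prop
      exact hcont.subtype_mk _
    · intro x y hxy
      apply hΦ
      have h3 := congrArg Subtype.val hxy
      simp only [add_right_inj] at h3
      exact smul_right_injective E (r := r / (2 * C')) (by positivity) h3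

/-- A finite simplicial complex has Hausdorff dimension at most its combinatorial dimension. -/
theorem dimH_space_le {m n : ℕ} (P : Geometry.SimplicialComplex ℝ (EuclideanSpace ℝ (Fin m)))
    (hfin : P.faces.Finite) (hcard : ∀ s ∈ P.faces, s.card ≤ n + 1) : dimH P.space ≤ n := by
  classical
  unfold Geometry.SimplicialComplex.space
  rw [dimH_bUnion hfin.countable]
  refine iSup₂_le fun s hs => ?_
  have hne := P.nonempty_of_mem_faces hs
  rw [Real.Convex.dimH_eq_finrank_vectorSpan
    (convex_convexHull ℝ (s : Set (EuclideanSpace ℝ (Fin m))))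
    (convexHull_nonempty_iff.2 (by exact_mod_cast hne)),
    ← direction_affineSpan, affineSpan_convexHull, direction_affineSpan]
  have h1 := finrank_vectorSpan_image_finset_le ℝ (id : EuclideanSpace ℝ (Fin m) → _) s
    (n := s.card - 1) (by have := hne.card_pos; omega)
  rw [Finset.image_id] at h1
  have h2 := hcard s hs
  exact_mod_cast h1.trans (by omega)

/-- General position: for each set `A` of `n + 1` coordinates, the `C¹` image in `ℝ^A` of an
`n`-dimensional compact set has open dense complement, so an arbitrarily small translation
avoids, for all these `A` at once, the points whose coordinates in `A` all vanish. -/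
theorem exists_generic_shift {m n : ℕ} {ι : Type*} [Fintype ι]
    {S : Set (EuclideanSpace ℝ (Fin m))} (hS : IsCompact S) (hdim : dimH S ≤ n)
    {Φ : EuclideanSpace ℝ (Fin m) → ι → ℝ} (hΦ : ContDiff ℝ 1 Φ) {η : ℝ} (hη : 0 < η) :
    ∃ c : ι → ℝ, ‖c‖ < η ∧ ∀ y ∈ S, (Finset.univ.filter fun a => Φ y a + c a = 0).card ≤ n := by
  classical
  let I := {A : Finset ι // A.card = n + 1}
  let R : (A : I) → (ι → ℝ) → (A.1 → ℝ) := fun A z a => - z a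
  have hRc : ∀ A, Continuous (R A) := fun A => by fun_prop
  have hRo : ∀ A, IsOpenMap (R A) := by
    intro A
    have hsurj : Function.Surjective (LinearMap.pi (fun a : A.1 => -LinearMap.proj (R := ℝ)
        (φ := fun _ : ι => ℝ) a.1)) := by
      intro z
      refine ⟨fun i => if h : i ∈ A.1 then - z ⟨i, h⟩ else 0, ?_⟩
      ext a
      simp
    exact LinearMap.isOpenMap_of_finiteDimensional _ hsurj
  let Ψ : (A : I) → EuclideanSpace ℝ (Fin m) → (A.1 → ℝ) := fun A y a => Φ y a
  have hΨ : ∀ A, ContDiff ℝ 1 (Ψ A) := by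
    intro A
    rw [contDiff_pi]
    intro a
    exact (contDiff_pi.1 hΦ) a.1
  -- `c` is good for `A` when `-c` restricted to `A` is not attained by `Φ` on `S`
  have hdense : Dense (⋂ A : I, R A ⁻¹' (Ψ A '' S)ᶜ) := by
    apply dense_iInter_of_isOpen
    · intro A
      exact ((hS.image (hΨ A).continuous).isClosed.isOpen_compl).preimage (hRc A)
    · intro A
      refine Dense.preimage ?_ (hRo A)
      refine ContDiffOn.dense_compl_image_of_dimH_lt_finrank (hΨ A).contDiffOn convex_univ
        (subset_univ _) (hdim.trans_lt ?_)
      rw [Module.finrank_fintype_fun_eq_card, Fintype.card_coe, A.2]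
      exact_mod_cast Nat.lt_succ_self n
  obtain ⟨c, hc, hcη⟩ := hdense.exists_mem_open Metric.isOpen_ball
    ⟨0, Metric.mem_ball_self hη⟩ |>.imp fun _ h => h
  refine ⟨c, by simpa using hcη, fun y hy => ?_⟩
  by_contra! hlt
  obtain ⟨A, hA, hAc⟩ := Finset.exists_subset_card_eq (Nat.succ_le_of_lt hlt)
  have := mem_iInter.1 hc ⟨A, hAc⟩
  apply this
  refine ⟨y, hy, ?_⟩
  ext a
  have ha := (Finset.mem_filter.1 (hA a.2)).2
  simp only [Ψ, R]
  linarith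

open scoped Manifold in
/-- If the functions `φ a` oscillate by less than `η` on the fibers of `F`, then up to `η` they
factor smoothly through `F`. The admissible values over a point form a convex set, and a constant
admissible at one point stays admissible nearby, so a smooth partition of unity glues them. -/
theorem exists_smooth_factor {X : Type*} [TopologicalSpace X] [CompactSpace X]
    {m : ℕ} {ι : Type*} [Fintype ι] {F : X → EuclideanSpace ℝ (Fin m)} (hF : Continuous F)
    {φ : ι → X → ℝ} (hφ : ∀ a, Continuous (φ a)) {η : ℝ}
    (hη : ∀ x y, F x = F y → ∀ a, |φ a x - φ a y| < η) :
    ∃ Φ : EuclideanSpace ℝ (Fin m) → ι → ℝ, ContDiff ℝ 1 Φ ∧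
      ∀ x a, |Φ (F x) a - φ a x| < η := by
  let t : EuclideanSpace ℝ (Fin m) → Set (ι → ℝ) := fun y =>
    {v : ι → ℝ | ∀ x, F x = y → ∀ a, v a ∈ Metric.ball (φ a x) η}
  have hconv : ∀ y, Convex ℝ (t y) := by
    intro y v hv w hw α β hα hβ hαβ x hx a
    exact convex_ball _ _ (hv x hx a) (hw x hx a) hα hβ hαβ
  have hloc : ∀ y, ∃ c : ι → ℝ, ∀ᶠ z in 𝓝 y, c ∈ t z := by
    intro y
    obtain ⟨c, hc⟩ : ∃ c : ι → ℝ, ∀ x, F x = y → ∀ a, |c a - φ a x| < η := by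
      by_cases hy : ∃ x, F x = y
      · obtain ⟨x, hx⟩ := hy
        exact ⟨fun a => φ a x, fun x' hx' a => hη x x' (hx.trans hx'.symm) a⟩
      · exact ⟨0, fun x hx => (hy ⟨x, hx⟩).elim⟩
    refine ⟨c, ?_⟩
    have hfib := hF.isClosedMap.eventually_nhds_fiber (p := fun x => ∀ a, |c a - φ a x| < η) y <| by
      intro x hx
      rw [eventually_all]
      intro a
      exact ((continuous_const.sub (hφ a)).abs.continuousAt).eventually_lt
        continuousAt_const (hc x hx a)
    filter_upwards [hfib] with z hz x hx a
    simpa [Real.dist_eq] using hz x hx a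
  obtain ⟨Φ, hΦ⟩ := exists_contMDiffMap_forall_mem_convex_of_local_const (n := 1)
    𝓘(ℝ, EuclideanSpace ℝ (Fin m)) hconv hloc
  exact ⟨Φ, Φ.contMDiff.contDiff, fun x a => by simpa [Real.dist_eq] using hΦ (F x) x rfl a⟩

/-- Where mean dimension zero is used: the values of `f` along the block `{0, …, N-1}^k` can be
perturbed by less than `η` to continuous functions of which at most `δ N^k` vanish at any given
point. The perturbation factors through a complex of dimension `D ≤ δ N^k`, where general
position applies. -/
theorem exists_block_map {k : ℕ} {X : Type*} [MetricSpace X] [CompactSpace X]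
    {T : (Fin k → ℤ) → X → X} (hT : IsZkAction T) (hmdim : mdim X T = 0)
    (f : C(X, ℝ)) {η δ : ℝ} (hη : 0 < η) (hδ : 0 < δ) :
    ∃ (N D : ℕ) (G : (Fin k → Fin N) → X → ℝ), 1 ≤ N ∧ (D : ℝ) ≤ δ * (N : ℝ) ^ k ∧
      (∀ a, Continuous (G a)) ∧
      (∀ a y, |G a y - f (T (fun i => (a i : ℤ)) y)| < η) ∧
      ∀ y, (Finset.univ.filter fun a => G a y = 0).card ≤ D := by
  obtain ⟨ε, hε, hfε⟩ := Metric.uniformContinuous_iff.1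
    (CompactSpace.uniformContinuous_of_continuous f.continuous) (η / 2) (half_pos hη)
  have h0 : (⨅ (N : ℕ) (_ : 1 ≤ N),
      (widim X (blockRho T dist N) ε : ℝ≥0∞) / (N : ℝ≥0∞) ^ k) < ENNReal.ofReal δ := by
    have : (⨅ (N : ℕ) (_ : 1 ≤ N),
      (widim X (blockRho T dist N) ε : ℝ≥0∞) / (N : ℝ≥0∞) ^ k) ≤ mdim X T :=
      le_iSup₂ (f := fun (ε : ℝ) (_ : 0 < ε) => (⨅ (N : ℕ) (_ : 1 ≤ N),
      (widim X (blockRho T dist N) ε : ℝ≥0∞) / (N : ℝ≥0∞) ^ k)) ε hε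
    rw [hmdim] at this
    exact this.trans_lt (by simpa using hδ)
  simp only [iInf_lt_iff] at h0
  obtain ⟨N, hN, hlt⟩ := h0
  obtain ⟨m, P, hfin, hcard, F, hFc, hF⟩ := Nat.sInf_mem (nonempty_widim_set hT hN hε)
  change ∀ s ∈ P.faces, s.card ≤ widim X (blockRho T dist N) ε + 1 at hcard
  set D := widim X (blockRho T dist N) ε
  have hN0 : (0 : ℝ) < (N : ℝ) ^ k := by positivity
  have hFc' : Continuous fun x => (F x : EuclideanSpace ℝ (Fin m)) :=
    continuous_subtype_val.comp hFc
  obtain ⟨Φ, hΦ, hΦf⟩ := exists_smooth_factor (η := η / 2) hFc'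
    (φ := fun (a : Fin k → Fin N) x => f (T (fun i => (a i : ℤ)) x))
    (fun a => f.continuous.comp (hT.cont _)) (by
      intro x y hxy a
      have h1 := hF x y (Subtype.ext hxy)
      have h2 : dist (T (fun i => (a i : ℤ)) x) (T (fun i => (a i : ℤ)) y) < ε := by
        refine lt_of_le_of_lt ?_ h1
        exact le_ciSup (f := fun a : Fin k → Fin N =>
          dist (T (fun i => (a i : ℤ)) x) (T (fun i => (a i : ℤ)) y)) (finite_range _).bddAbove a
      exact hfε h2)
  obtain ⟨c, hcη, hc⟩ := exists_generic_shift (S := range fun x => (F x : EuclideanSpace ℝ (Fin m)))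
    (isCompact_range hFc')
    ((dimH_mono (by rintro _ ⟨x, rfl⟩; exact (F x).2)).trans (dimH_space_le P hfin hcard))
    hΦ (half_pos hη)
  refine ⟨N, D, fun a y => Φ (F y) a + c a, hN, ?_, ?_, ?_, ?_⟩
  · have hlt' : ((D : ℝ≥0∞) / (N : ℝ≥0∞) ^ k).toReal ≤ δ :=
      ENNReal.toReal_le_of_le_ofReal hδ.le hlt.le
    rw [ENNReal.toReal_div] at hlt'
    simp only [ENNReal.toReal_natCast, ENNReal.toReal_pow] at hlt'
    rwa [div_le_iff₀ hN0] at hlt'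
  · intro a
    exact ((continuous_apply a).comp (hΦ.continuous.comp hFc')).add continuous_const
  · intro a y
    have h1 := hΦf y a
    have h2 : |c a| ≤ ‖c‖ := norm_le_pi_norm c a
    rw [abs_lt] at h1 ⊢
    rw [abs_le] at h2
    constructor <;> linarith [h1.1, h1.2, h2.1, h2.2]
  · intro y
    exact hc _ (mem_range_self y)

/-! ### The lattice -/

/-- The half-open cube `[a, b)^k` of lattice points. -/
noncomputable def cube (k : ℕ) (a b : ℤ) : Finset (Fin k → ℤ) :=
  Fintype.piFinset fun _ => Finset.Ico a b

theorem mem_cube {k : ℕ} {a b : ℤ} {m : Fin k → ℤ} : m ∈ cube k a b ↔ ∀ i, a ≤ m i ∧ m i < b := by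
  simp [cube]

theorem card_cube (k : ℕ) (a b : ℤ) : (cube k a b).card = (b - a).toNat ^ k := by
  simp [cube]

/-- The squared Euclidean norm of a lattice point. -/
noncomputable def latticeSq {k : ℕ} (m : Fin k → ℤ) : ℝ := ∑ i, (m i : ℝ) ^ 2

theorem latticeSq_nonneg {k : ℕ} (m : Fin k → ℤ) : 0 ≤ latticeSq m :=
  Finset.sum_nonneg fun _ _ => sq_nonneg _

theorem latticeSq_sub {k : ℕ} (p b : Fin k → ℤ) :
    latticeSq (p - b) = latticeSq p - 2 * ∑ i, (p i : ℝ) * b i + latticeSq b := by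
  simp only [latticeSq, Finset.mul_sum, ← Finset.sum_sub_distrib, ← Finset.sum_add_distrib]
  refine Finset.sum_congr rfl fun i _ => ?_
  simp only [Pi.sub_apply]
  push_cast
  ring

theorem latticeSq_sub_single {k : ℕ} (p : Fin k → ℤ) (i : Fin k) (t : ℤ) :
    latticeSq (p - Pi.single i t) = latticeSq p - 2 * t * p i + (t : ℝ) ^ 2 := by
  have h1 : ∑ j, (p j : ℝ) * ((Pi.single i t : Fin k → ℤ) j : ℝ) = p i * t := by
    rw [Finset.sum_eq_single i]
    · simp
    · intro j _ hj; simp [Pi.single_eq_of_ne hj]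
    · simp
  have h2 : latticeSq (Pi.single i t : Fin k → ℤ) = (t : ℝ) ^ 2 := by
    unfold latticeSq
    rw [Finset.sum_eq_single i]
    · simp
    · intro j _ hj; simp [Pi.single_eq_of_ne hj]
    · simp
  rw [latticeSq_sub, h1, h2]
  ring

/-! ### Markers and the power diagram -/

/-- A continuous form of the marker property: a point `m` with `lam (T m x) < Λ` is a marker of `x`,
carrying the penalty `lam (T m x)`. Distinct markers are more than `M` apart, and from every `x`
some marker is visible at total cost `|m|² + lam (T m x) ≤ Λ - 1`. The function `lam` is `Λ` off
the marker set `U` and `0` on a compact subset of `U` whose translates still cover. -/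
theorem exists_penalty {k : ℕ} {X : Type*} [MetricSpace X] [CompactSpace X]
    {T : (Fin k → ℤ) → X → X} (hT : IsZkAction T) (hmarker : MarkerProperty T) (M : ℕ) :
    ∃ (Λ : ℝ) (lam : X → ℝ), 1 ≤ Λ ∧ Continuous lam ∧ (∀ x, 0 ≤ lam x) ∧
      (∀ x, ∃ m, latticeSq m + lam (T m x) ≤ Λ - 1) ∧
      ∀ x m, m ≠ 0 → lam x < Λ → lam (T m x) < Λ → ∃ i, (M : ℤ) < |m i| := by
  obtain ⟨U, hUo, hUc, hU⟩ := hmarker (cube k (-M) (M + 1))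
  have himg : ∀ n, T n '' U = T (-n) ⁻¹' U := by
    intro n
    ext x
    constructor
    · rintro ⟨y, hy, rfl⟩
      simpa [← hT.map_add, hT.map_zero] using hy
    · intro hx
      exact ⟨T (-n) x, hx, by rw [← hT.map_add]; simp [hT.map_zero]⟩
  obtain ⟨s, hs⟩ := (isCompact_univ (X := X)).elim_finite_subcover (fun n => T n '' U)
    (fun n => by rw [himg]; exact hUo.preimage (hT.cont _)) hUc.ge
  -- shrink the finite cover by translates of `U` to a closed cover, and pull it back into `U`
  obtain ⟨v, hvU, hvc, hvs⟩ := exists_iUnion_eq_closed_subset (u := fun n : s => T n.1 '' U)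
    (fun n => by rw [himg]; exact hUo.preimage (hT.cont _)) (fun x => Set.toFinite _)
    (by
      rw [← univ_subset_iff]
      intro x hx
      obtain ⟨n, hn, hxn⟩ := mem_iUnion₂.1 (hs hx)
      exact mem_iUnion.2 ⟨⟨n, hn⟩, hxn⟩)
  let K : Set X := ⋃ n : s, T n.1 ⁻¹' v n
  have hKc : IsClosed K := isClosed_iUnion_of_finite fun n => (hvc n).preimage (hT.cont _)
  have hKU : K ⊆ U := by
    intro x hx
    obtain ⟨n, hn⟩ := mem_iUnion.1 hx
    have := hvs n hn
    rw [himg] at this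
    simpa [← hT.map_add, hT.map_zero] using this
  obtain ⟨h, hK, hUc', h01⟩ := exists_continuous_zero_one_of_isClosed hKc hUo.isClosed_compl
    (disjoint_compl_right_iff_subset.2 hKU)
  let Λ : ℝ := 1 + ∑ n ∈ s, latticeSq (-n)
  have hΛ : 1 ≤ Λ := by
    have := Finset.sum_nonneg fun n (_ : n ∈ s) => latticeSq_nonneg (-n)
    simp only [Λ]; linarith
  have hlt : ∀ x, Λ * h x < Λ → x ∈ U := by
    intro x hx
    by_contra hxU
    have : h x = 1 := hUc' hxU
    rw [this] at hx
    linarith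
  refine ⟨Λ, fun x => Λ * h x, hΛ, continuous_const.mul h.continuous,
    fun x => mul_nonneg (by linarith) (h01 x).1, ?_, ?_⟩
  · intro x
    obtain ⟨n, hn⟩ := mem_iUnion.1 (hvU.ge (mem_univ x))
    refine ⟨-n.1, ?_⟩
    have hxK : T (-n.1) x ∈ K := mem_iUnion.2 ⟨n, by
      rw [mem_preimage, ← hT.map_add]; simpa [hT.map_zero] using hn⟩
    have h0 : h (T (-n.1) x) = 0 := hK hxK
    beta_reduce
    rw [h0]
    have := Finset.single_le_sum (f := fun n => latticeSq (-n))
      (fun n (_ : n ∈ s) => latticeSq_nonneg (-n)) n.2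
    simp only [Λ]
    linarith
  · intro x m hm hx hmx
    by_contra! hcon
    have hmF : m ∈ cube k (-M) (M + 1) := mem_cube.2 fun i => by
      have := abs_le.1 (hcon i)
      omega
    have := hU m hmF hm
    exact this.subset ⟨hlt _ hmx, mem_image_of_mem _ (hlt _ hx)⟩

/-- At `x`, only one marker position `p` is seen by the weights from all the positions `b` with
`|b|_∞ ≤ r`. -/
def IsGood {k : ℕ} {X : Type*} (T : (Fin k → ℤ) → X → X) (B : Finset (Fin k → ℤ))
    (w : (Fin k → ℤ) → X → ℝ) (r : ℕ) (x : X) : Prop :=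
  ∃ p, ∀ b : Fin k → ℤ, (∀ i, |b i| ≤ (r : ℤ)) → ∀ m ∈ B, w m (T b x) ≠ 0 → m + b = p

/-- Translating a bounded nonnegative function decreases its sum over a large cube by at most a
boundary term. -/
theorem sum_sub_sum_shift_le {k : ℕ} {ψ : (Fin k → ℤ) → ℝ} {C : ℝ} (h0 : ∀ b, 0 ≤ ψ b)
    (hC : ∀ b, ψ b ≤ C) {t L : ℕ} (hL : 2 * t ≤ L) (z : Fin k → ℤ) (hz : ∀ i, |z i| ≤ (t : ℤ)) :
    ∑ b ∈ cube k 0 L, ψ b - ∑ b ∈ cube k 0 L, ψ (b + z) ≤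
      C * ((L : ℝ) ^ k - ((L : ℝ) - 2 * t) ^ k) := by
  have hsub : cube k t (L - t) ⊆ cube k 0 L := by
    intro b hb
    rw [mem_cube] at hb ⊢
    intro i
    have := hb i
    omega
  have h1 : ∑ b ∈ cube k t (L - t), ψ b ≤ ∑ b ∈ cube k 0 L, ψ (b + z) := by
    have hmap : ∑ b ∈ cube k 0 L, ψ (b + z) =
        ∑ b ∈ (cube k 0 L).map (addRightEmbedding z), ψ b := by
      rw [Finset.sum_map]; rfl
    rw [hmap]
    refine Finset.sum_le_sum_of_subset_of_nonneg ?_ fun b _ _ => h0 b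
    intro b hb
    rw [Finset.mem_map]
    refine ⟨b - z, ?_, by simp⟩
    rw [mem_cube] at hb ⊢
    intro i
    have := hb i
    have := abs_le.1 (hz i)
    simp only [Pi.sub_apply]
    omega
  have h2 : ∑ b ∈ cube k 0 L, ψ b - ∑ b ∈ cube k t (L - t), ψ b ≤
      C * ((L : ℝ) ^ k - ((L : ℝ) - 2 * t) ^ k) := by
    rw [← Finset.sum_sdiff hsub, add_sub_cancel_right]
    have h3 := Finset.sum_le_card_nsmul (cube k 0 L \ cube k t (L - t)) ψ C fun b _ => hC b
    refine h3.trans_eq ?_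
    rw [nsmul_eq_mul, Finset.cast_card_sdiff hsub, card_cube, card_cube]
    have h4 : ((L : ℤ) - t - t).toNat = L - 2 * t := by omega
    have h5 : ((L : ℤ) - 0).toNat = L := by omega
    rw [h4, h5]
    push_cast [Nat.cast_sub hL]
    ring
  linarith

theorem tendsto_ratio_pow (k : ℕ) (c : ℝ) :
    Tendsto (fun L : ℕ => (((L : ℝ) + c) / L) ^ k) atTop (𝓝 1) := by
  have h1 : Tendsto (fun L : ℕ => 1 + c / (L : ℝ)) atTop (𝓝 (1 + 0)) :=
    tendsto_const_nhds.add (tendsto_const_div_atTop_nhds_zero_nat c)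
  have h2 := h1.pow k
  simp only [add_zero, one_pow] at h2
  refine h2.congr' ?_
  filter_upwards [eventually_gt_atTop 0] with L hL
  have : (L : ℝ) ≠ 0 := by positivity
  congr 1
  field_simp

/-- The function `b ↦ |b|² - E (T b x)` is the maximum of the affine functions
`b ↦ 2⟨p, b⟩ - |p|² - lam (T p x)`, hence convex, and only the slopes `2p` of markers `p` matter.
At a point that is not good, two distinct markers, with slopes more than `2M` apart in some
coordinate `i`, almost attain the maximum within distance `r`. Comparing `E` with one of them at
`+2kr` and with the other at `-2kr` bounds its second difference at that scale. -/
theorem second_difference_le_of_not_good {k : ℕ} {X : Type*} {T : (Fin k → ℤ) → X → X}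
    (hadd : ∀ m n x, T (m + n) x = T m (T n x))
    {lam E : X → ℝ} {Λ : ℝ} {M r : ℕ} (hk : 1 ≤ k) (hr : 1 ≤ r) (hM : 1 ≤ M)
    (hsep : ∀ x m, m ≠ 0 → lam x < Λ → lam (T m x) < Λ → ∃ i, (M : ℤ) < |m i|)
    (hE : ∀ m x, E x ≤ latticeSq m + lam (T m x))
    (hEmin : ∀ x, ∃ m, E x = latticeSq m + lam (T m x))
    (hEΛ : ∀ x, E x ≤ Λ - 1) {B : Finset (Fin k → ℤ)} {x : X}
    (hx : ¬ IsGood T B (fun m x => max 0 (E x + 1 - (latticeSq m + lam (T m x)))) r x) :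
    ∃ i : Fin k, E (T (Pi.single i (2 * k * r : ℤ)) x) + E (T (-Pi.single i (2 * k * r : ℤ)) x) ≤
      2 * E x + 2 * (2 * k * r : ℝ) ^ 2 - k * r * M := by
  obtain ⟨p, hp⟩ := hEmin x
  unfold IsGood at hx
  push Not at hx
  obtain ⟨b, hb, m, -, hw, hmp⟩ := hx p
  have hwlt : latticeSq m + lam (T m (T b x)) < E (T b x) + 1 := by
    by_contra! hcon
    exact hw (max_eq_left (by linarith))
  obtain ⟨q, rfl⟩ : ∃ q, m = q - b := ⟨m + b, by simp⟩
  rw [sub_add_cancel] at hmp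
  rw [← hadd, sub_add_cancel] at hwlt
  have shift : ∀ c z, E (T z x) ≤ latticeSq (c - z) + lam (T c x) := by
    intro c z
    have := hE (c - z) (T z x)
    rwa [← hadd, sub_add_cancel] at this
  have hpb := shift p b
  -- both `p` and `q` are markers of `x`: their penalties are below `Λ`
  obtain ⟨j, hj⟩ := hsep (T p x) (q - p) (sub_ne_zero.2 hmp)
    (by linarith [hEΛ x, latticeSq_nonneg p])
    (by rw [← hadd, sub_add_cancel]; linarith [hEΛ (T b x), latticeSq_nonneg (q - b)])
  have : Nonempty (Fin k) := ⟨j⟩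
  obtain ⟨i, -, hi⟩ := Finset.exists_max_image Finset.univ (fun i => |(q - p) i|)
    Finset.univ_nonempty
  have hd : (M : ℤ) < |(q - p) i| := hj.trans_le (hi j (Finset.mem_univ _))
  set d : ℝ := |(q i : ℝ) - p i| with hdd
  have hdM : (M : ℝ) ≤ d := by
    have : ((M : ℤ) : ℝ) ≤ ((|(q - p) i| : ℤ) : ℝ) := by exact_mod_cast hd.le
    simpa [hdd] using this
  -- moving from `0` to `b` changes the gap between the two affine functions by at most `2kdr`
  have hdot : ∑ j, (q j : ℝ) * b j - ∑ j, (p j : ℝ) * b j ≤ k * (d * r) := by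
    rw [← Finset.sum_sub_distrib]
    have : ∀ j ∈ Finset.univ, (q j : ℝ) * b j - p j * b j ≤ d * r := by
      intro j hj'
      have h1 : |(q j : ℝ) - p j| ≤ d := by
        have : ((|(q - p) j| : ℤ) : ℝ) ≤ ((|(q - p) i| : ℤ) : ℝ) := by exact_mod_cast hi j hj'
        simpa [hdd] using this
      have h2 : |(b j : ℝ)| ≤ r := by exact_mod_cast hb j
      calc (q j : ℝ) * b j - p j * b j = ((q j : ℝ) - p j) * b j := by ring
        _ ≤ |((q j : ℝ) - p j) * b j| := le_abs_self _
        _ = |(q j : ℝ) - p j| * |(b j : ℝ)| := abs_mul _ _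
        _ ≤ d * r := by gcongr
    have h3 := Finset.sum_le_card_nsmul _ _ _ this
    simpa using h3
  refine ⟨i, ?_⟩
  rw [latticeSq_sub] at hwlt hpb
  have hd1 : (1 : ℝ) ≤ k * r * M := by
    exact_mod_cast Nat.one_le_iff_ne_zero.2 (by positivity)
  have hd2 : (k * r * M : ℝ) ≤ k * r * d := by gcongr
  rw [← Pi.single_neg]
  rcases abs_cases ((q i : ℝ) - p i) with ⟨h, -⟩ | ⟨h, -⟩
  · have e1 := shift q (Pi.single i (2 * k * r : ℤ))
    have e2 := shift p (Pi.single i (-(2 * k * r : ℤ)))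
    rw [latticeSq_sub_single] at e1 e2
    push_cast at e1 e2
    rw [← hdd] at h
    have hq : (q i : ℝ) = p i + d := by linarith
    rw [hq] at e1
    nlinarith
  · have e1 := shift p (Pi.single i (2 * k * r : ℤ))
    have e2 := shift q (Pi.single i (-(2 * k * r : ℤ)))
    rw [latticeSq_sub_single] at e1 e2
    push_cast at e1 e2
    rw [← hdd] at h
    have hq : (q i : ℝ) = p i - d := by linarith
    rw [hq] at e2
    nlinarith

/-- The cost `E x = min_m (|m|² + lam (T m x))` of the cheapest marker. By the bound `Λ - 1` the
minimum is over a finite set `B` independent of `x`, whence continuity. -/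
theorem exists_energy {k : ℕ} {X : Type*} [TopologicalSpace X]
    {T : (Fin k → ℤ) → X → X} (hT : IsZkAction T) {Λ : ℝ} {lam : X → ℝ} (hΛ : 1 ≤ Λ)
    (hlam : Continuous lam) (hlam0 : ∀ x, 0 ≤ lam x)
    (hsmall : ∀ x, ∃ m, latticeSq m + lam (T m x) ≤ Λ - 1) :
    ∃ (B : Finset (Fin k → ℤ)) (E : X → ℝ), Continuous E ∧ (∀ x, 0 ≤ E x) ∧
      (∀ x, E x ≤ Λ - 1) ∧ (∀ m x, E x ≤ latticeSq m + lam (T m x)) ∧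
      ∀ x, ∃ m ∈ B, E x = latticeSq m + lam (T m x) := by
  obtain ⟨K, hK⟩ := exists_nat_ge Λ
  let B := cube k (-K) (K + 1)
  have hB0 : B.Nonempty := ⟨0, mem_cube.2 fun i => by simp⟩
  have hout : ∀ m, m ∉ B → ∀ x, Λ ≤ latticeSq m + lam (T m x) := by
    intro m hm x
    have : ∃ i, (K : ℤ) ≤ |m i| := by
      by_contra! hcon
      exact hm (mem_cube.2 fun i => by have := abs_lt.1 (hcon i); omega)
    obtain ⟨i, hi⟩ := this
    have h1 : (m i : ℝ) ^ 2 ≤ latticeSq m :=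
      Finset.single_le_sum (f := fun i => (m i : ℝ) ^ 2) (fun _ _ => sq_nonneg _)
        (Finset.mem_univ i)
    have h2 : (K : ℝ) ≤ |(m i : ℝ)| := by exact_mod_cast hi
    have h3 : Λ ≤ (m i : ℝ) ^ 2 := by
      rw [← sq_abs]
      nlinarith
    linarith [hlam0 (T m x)]
  let E : X → ℝ := fun x => B.inf' hB0 fun m => latticeSq m + lam (T m x)
  have hEle : ∀ m ∈ B, ∀ x, E x ≤ latticeSq m + lam (T m x) := fun m hm x =>
    Finset.inf'_le _ hm
  have hEΛ : ∀ x, E x ≤ Λ - 1 := by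
    intro x
    obtain ⟨m, hm⟩ := hsmall x
    by_cases hmB : m ∈ B
    · exact (hEle m hmB x).trans hm
    · linarith [hout m hmB x]
  refine ⟨B, E, ?_, ?_, hEΛ, ?_, ?_⟩
  · exact Continuous.finset_inf'_apply hB0 fun m _ =>
      continuous_const.add (hlam.comp (hT.cont m))
  · intro x
    exact Finset.le_inf' _ _ fun m _ => add_nonneg (latticeSq_nonneg m) (hlam0 _)
  · intro m x
    by_cases hmB : m ∈ B
    · exact hEle m hmB x
    · linarith [hout m hmB x, hEΛ x]
  · intro x
    obtain ⟨m, hm, h⟩ := Finset.exists_mem_eq_inf' hB0 fun m => latticeSq m + lam (T m x)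
    exact ⟨m, hm, h⟩

open Classical in
/-- The second differences of `|b|² - E (T b x)` are nonnegative, at least `krM` when summed over
the coordinates at points that are not good, and telescope over a cube to the part coming from
`|b|²` plus a boundary term. So the points that are not good have density about `8k²r/M`. -/
theorem card_not_good_le {k : ℕ} {X : Type*} {T : (Fin k → ℤ) → X → X}
    (hadd : ∀ m n x, T (m + n) x = T m (T n x))
    {lam E : X → ℝ} {Λ : ℝ} {M r : ℕ} (hk : 1 ≤ k) (hr : 1 ≤ r) (hM : 1 ≤ M)
    (hsep : ∀ x m, m ≠ 0 → lam x < Λ → lam (T m x) < Λ → ∃ i, (M : ℤ) < |m i|)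
    (hE0 : ∀ x, 0 ≤ E x)
    (hE : ∀ m x, E x ≤ latticeSq m + lam (T m x))
    (hEmin : ∀ x, ∃ m, E x = latticeSq m + lam (T m x))
    (hEΛ : ∀ x, E x ≤ Λ - 1) (B : Finset (Fin k → ℤ)) {L : ℕ} (hL : 2 * (2 * k * r) ≤ L) (x : X) :
    (((cube k 0 L).filter fun b => ¬ IsGood T B
      (fun m x => max 0 (E x + 1 - (latticeSq m + lam (T m x)))) r (T b x)).card : ℝ) *
        (k * r * M) ≤
      2 * k * (2 * k * r) ^ 2 * (L : ℝ) ^ k +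
        2 * k * (Λ * ((L : ℝ) ^ k - ((L : ℝ) - 2 * (2 * k * r)) ^ k)) := by
  set w : (Fin k → ℤ) → X → ℝ := fun m x => max 0 (E x + 1 - (latticeSq m + lam (T m x)))
  -- the second difference, at scale `2kr` in direction `i`, of `b ↦ |b|² - E (T b x)` at `b = 0`
  let A : Fin k → X → ℝ := fun i y => 2 * (2 * k * r : ℝ) ^ 2 + 2 * E y -
    E (T (Pi.single i (2 * k * r : ℤ)) y) - E (T (-Pi.single i (2 * k * r : ℤ)) y)
  have hA0 : ∀ i y, 0 ≤ A i y := by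
    intro i y
    obtain ⟨p, hp⟩ := hEmin y
    have shift : ∀ z, E (T z y) ≤ latticeSq (p - z) + lam (T p y) := by
      intro z
      have := hE (p - z) (T z y)
      rwa [← hadd, sub_add_cancel] at this
    have e1 := shift (Pi.single i (2 * k * r : ℤ))
    have e2 := shift (Pi.single i (-(2 * k * r : ℤ)))
    rw [latticeSq_sub_single] at e1 e2
    rw [Pi.single_neg] at e2
    push_cast at e1 e2
    simp only [A]
    linarith
  have hAbad : ∀ y, ¬ IsGood T B w r y → (k * r * M : ℝ) ≤ ∑ i, A i y := by
    intro y hy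
    obtain ⟨i, hi⟩ := second_difference_le_of_not_good hadd hk hr hM hsep hE hEmin hEΛ hy
    have h1 : A i y ≤ ∑ i, A i y :=
      Finset.single_le_sum (f := fun i => A i y) (fun i _ => hA0 i y) (Finset.mem_univ i)
    refine le_trans ?_ h1
    simp only [A]
    linarith
  have h1 : (((cube k 0 L).filter fun b => ¬ IsGood T B w r (T b x)).card : ℝ) * (k * r * M) ≤
      ∑ b ∈ cube k 0 L, ∑ i, A i (T b x) := by
    rw [← nsmul_eq_mul]
    refine (Finset.card_nsmul_le_sum _ (fun b => ∑ i, A i (T b x)) _ fun b hb =>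
      hAbad _ (Finset.mem_filter.1 hb).2).trans ?_
    exact Finset.sum_le_sum_of_subset_of_nonneg (Finset.filter_subset _ _)
      fun b _ _ => Finset.sum_nonneg fun i _ => hA0 i _
  refine h1.trans ?_
  rw [Finset.sum_comm]
  have h2 : ∀ i ∈ Finset.univ, ∑ b ∈ cube k 0 L, A i (T b x) ≤ 2 * (2 * k * r) ^ 2 * (L : ℝ) ^ k +
        2 * (Λ * ((L : ℝ) ^ k - ((L : ℝ) - 2 * (2 * k * r)) ^ k)) := by
    intro i _
    have habs : ∀ j, |(Pi.single i (2 * k * r : ℤ) : Fin k → ℤ) j| ≤ ((2 * k * r : ℕ) : ℤ) := by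
      intro j
      by_cases hj : j = i
      · subst hj; rw [Pi.single_eq_same, abs_of_nonneg (by positivity)]; push_cast; rfl
      · rw [Pi.single_eq_of_ne hj, abs_zero]; positivity
    have hs := fun z hz => sum_sub_sum_shift_le (ψ := fun b => E (T b x)) (C := Λ)
      (fun b => hE0 _) (fun b => by linarith [hEΛ (T b x)]) hL z hz
    have e1 := hs (Pi.single i (2 * k * r : ℤ)) habs
    have e2 := hs (-Pi.single i (2 * k * r : ℤ)) (fun j => by simpa using habs j)
    have hcard : ((cube k 0 L).card : ℝ) = (L : ℝ) ^ k := by rw [card_cube]; simp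
    simp only [A, Finset.sum_sub_distrib, Finset.sum_add_distrib, Finset.sum_const, nsmul_eq_mul,
      ← Finset.mul_sum, hcard]
    have hcomm : ∀ b z, T (b + z) x = T z (T b x) := fun b z => by rw [add_comm, hadd]
    simp only [hcomm] at e1 e2
    push_cast at e1 e2
    linarith
  refine (Finset.sum_le_card_nsmul _ _ _ h2).trans_eq ?_
  simp only [Finset.card_univ, Fintype.card_fin, nsmul_eq_mul]
  ring

open Classical in
/-- A continuous choice of markers: the weight `w m x` is positive when the marker at `m` is within
cost `1` of the cheapest one. If the markers are sufficiently separated, all but a proportion `δ`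
of every orbit is good at scale `r`. -/
theorem exists_weights {k : ℕ} (hk : 1 ≤ k) {X : Type*} [MetricSpace X] [CompactSpace X]
    {T : (Fin k → ℤ) → X → X} (hT : IsZkAction T) (hmarker : MarkerProperty T)
    {r : ℕ} (hr : 1 ≤ r) {δ : ℝ} (hδ : 0 < δ) :
    ∃ (B : Finset (Fin k → ℤ)) (w : (Fin k → ℤ) → X → ℝ), (∀ m, Continuous (w m)) ∧
      (∀ m x, 0 ≤ w m x) ∧ (∀ x, ∃ m ∈ B, 0 < w m x) ∧
      ∀ᶠ L : ℕ in atTop, ∀ x,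
        (((cube k 0 L).filter fun b => ¬ IsGood T B w r (T b x)).card : ℝ) ≤ δ * (L : ℝ) ^ k := by
  -- this `M` makes the main term `8k²r/M` of the density at most `δ/2`
  obtain ⟨M, hM⟩ := exists_nat_ge (max 1 (16 * k ^ 2 * r / δ))
  have hM1 : (1 : ℝ) ≤ M := (le_max_left _ _).trans hM
  have hM2 : 16 * k ^ 2 * r / δ ≤ M := (le_max_right _ _).trans hM
  rw [div_le_iff₀ hδ] at hM2
  obtain ⟨Λ, lam, hΛ, hlam, hlam0, hsmall, hsep⟩ := exists_penalty hT hmarker M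
  obtain ⟨B, E, hEc, hE0, hEΛ, hE, hEmin⟩ := exists_energy hT hΛ hlam hlam0 hsmall
  refine ⟨B, fun m x => max 0 (E x + 1 - (latticeSq m + lam (T m x))), ?_, ?_, ?_, ?_⟩
  · intro m
    exact continuous_const.max ((hEc.add continuous_const).sub
      (continuous_const.add (hlam.comp (hT.cont m))))
  · intro m x
    exact le_max_left _ _
  · intro x
    obtain ⟨m, hm, h⟩ := hEmin x
    exact ⟨m, hm, lt_max_of_lt_right (by linarith)⟩
  · have hlim : Tendsto (fun L : ℕ => 2 * k * (Λ * (1 - (((L : ℝ) + -(2 * (2 * k * r))) / L) ^ k)))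
        atTop (𝓝 (2 * k * (Λ * (1 - 1)))) :=
      ((tendsto_const_nhds.sub (tendsto_ratio_pow k _)).const_mul _).const_mul _
    have hkr : (0 : ℝ) < k * r * M := by
      have : (0 : ℝ) < k := by exact_mod_cast hk
      have : (0 : ℝ) < r := by exact_mod_cast hr
      positivity
    have hev := hlim.eventually_lt_const (u := δ / 2 * (k * r * M)) (by simp; positivity)
    filter_upwards [hev, eventually_ge_atTop (2 * (2 * k * r)), eventually_gt_atTop 0]
      with L hL1 hL2 hL3 x
    have hL : (0 : ℝ) < (L : ℝ) ^ k := by positivity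
    have := card_not_good_le hT.map_add hk hr (by exact_mod_cast hM1) hsep hE0 hE
      (fun x => (hEmin x).imp fun _ h => h.2) hEΛ B hL2 x
    rw [← mul_le_mul_iff_left₀ hkr]
    refine this.trans ?_
    have h1 : 2 * k * (Λ * ((L : ℝ) ^ k - ((L : ℝ) - 2 * (2 * k * r)) ^ k)) =
        2 * k * (Λ * (1 - (((L : ℝ) + -(2 * (2 * k * r))) / L) ^ k)) * (L : ℝ) ^ k := by
      rw [div_pow]
      field_simp
      ring
    have h2 : 2 * k * (Λ * ((L : ℝ) ^ k - ((L : ℝ) - 2 * (2 * k * r)) ^ k)) ≤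
        δ / 2 * (k * r * M) * (L : ℝ) ^ k := by
      rw [h1]; gcongr
    have h3 : 2 * k * (2 * k * r) ^ 2 ≤ δ / 2 * (k * r * M : ℝ) := by
      have : (k * r : ℝ) * (16 * k ^ 2 * r) ≤ k * r * (M * δ) := by gcongr
      nlinarith
    have h4 := mul_le_mul_of_nonneg_right h3 hL.le
    linarith

/-! ### Gluing blocks along the markers -/

/-- A position in the block `{0, …, N-1}^k`, viewed as a lattice point. -/
abbrev blockVec {k N : ℕ} (a : Fin k → Fin N) : Fin k → ℤ := fun i => (a i : ℤ)

/-- The residue of `-m` modulo `N`: the position of the origin in the block containing it of the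
grid `m + N ℤ^k`. -/
def blockPos {k N : ℕ} (hN : 1 ≤ N) (m : Fin k → ℤ) : Fin k → Fin N := fun i =>
  ⟨((-m i) % N).toNat, by
    have := Int.emod_lt_of_pos (-m i) (by omega : (0 : ℤ) < N)
    omega⟩

theorem blockPos_apply {k N : ℕ} (hN : 1 ≤ N) (m : Fin k → ℤ) (i : Fin k) :
    ((blockPos hN m i : ℕ) : ℤ) = (-m i) % N := by
  simp only [blockPos]
  exact Int.toNat_of_nonneg (Int.emod_nonneg _ (by omega))

/-- Around a good point `b` of the orbit of `x`, the perturbed function `g` reads off one of the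
block maps `G` on a whole block `c + {0, …, N-1}^k` containing `b`. The block belongs to the grid
`P + N ℤ^k` anchored at the unique marker `P` seen from there. -/
theorem exists_block_of_isGood {k : ℕ} {X : Type*} {T : (Fin k → ℤ) → X → X}
    (hadd : ∀ m n x, T (m + n) x = T m (T n x)) {N : ℕ} (hN : 1 ≤ N)
    {G : (Fin k → Fin N) → X → ℝ} {B : Finset (Fin k → ℤ)} {w : (Fin k → ℤ) → X → ℝ}
    (hw : ∀ x, ∃ m ∈ B, w m x ≠ 0) {g : X → ℝ}
    (hg : ∀ y q, q ∈ B → (∀ m ∈ B, w m y ≠ 0 → m = q) →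
      g y = G (blockPos hN q) (T (-blockVec (blockPos hN q)) y))
    {x : X} {b : Fin k → ℤ} (hb : IsGood T B w N (T b x)) :
    ∃ c P : Fin k → ℤ, (∀ i, (N : ℤ) ∣ c i - P i) ∧ (∃ a : Fin k → Fin N, b = c + blockVec a) ∧
      ∀ a : Fin k → Fin N, (∀ m ∈ B, w m (T (c + blockVec a) x) ≠ 0 → m + (c + blockVec a) = P) ∧
        g (T (c + blockVec a) x) = G a (T c x) := by
  obtain ⟨p, hp⟩ := hb
  have hNpos : (0 : ℤ) < N := by omega
  let P := p + b
  let c := b - blockVec (blockPos hN (P - b))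
  have hc : ∀ i, c i = b i - (b i - P i) % N := by
    intro i
    simp only [c, Pi.sub_apply, blockPos_apply, neg_sub]
  have hdvd : ∀ i, (N : ℤ) ∣ c i - P i := by
    intro i
    rw [hc, sub_right_comm]
    exact Int.dvd_self_sub_emod
  refine ⟨c, P, hdvd, ⟨blockPos hN (P - b), by simp [c]⟩, fun a => ?_⟩
  have hP : ∀ m ∈ B, w m (T (c + blockVec a) x) ≠ 0 → m + (c + blockVec a) = P := by
    intro m hm hwm
    have hshift : T (c + blockVec a) x = T (c + blockVec a - b) (T b x) := by
      rw [← hadd, sub_add_cancel]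
    rw [hshift] at hwm
    have := hp (c + blockVec a - b) (fun i => by
      simp only [Pi.sub_apply, Pi.add_apply, hc, blockVec]
      have h1 := Int.emod_nonneg (b i - P i) hNpos.ne'
      have h2 := Int.emod_lt_of_pos (b i - P i) hNpos
      have h3 := (a i).2
      rw [abs_le]
      constructor <;> omega) m hm hwm
    simp only [P, ← this]
    abel
  refine ⟨hP, ?_⟩
  obtain ⟨q, hqB, hq⟩ := hw (T (c + blockVec a) x)
  have hqP := hP q hqB hq
  rw [hg _ q hqB (fun m hm hwm => by
    have := hP m hm hwm
    rw [← hqP] at this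
    exact add_right_cancel this)]
  have hpos : blockPos hN q = a := by
    ext i
    have h1 := blockPos_apply hN q i
    have h2 : -q i = (c i - P i) + a i := by
      have := congrFun hqP i
      simp only [Pi.add_apply, blockVec] at this
      omega
    obtain ⟨d, hd⟩ := hdvd i
    rw [h2, hd, Int.mul_add_emod_self_left,
      Int.emod_eq_of_lt (by positivity) (by exact_mod_cast (a i).2)] at h1
    exact_mod_cast h1
  rw [hpos, ← hadd]
  congr 2
  abel

open Classical in
/-- Zeros at good points, by double counting against the points of the blocks containing them: the
blocks are pairwise disjoint, have `N ^ k` points each, stay within `N` of the cube, and contain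
at most `D` zeros each. -/
theorem card_good_zeros_mul_le {k : ℕ} {X : Type*} {T : (Fin k → ℤ) → X → X}
    (hadd : ∀ m n x, T (m + n) x = T m (T n x)) {N D : ℕ} (hN : 1 ≤ N)
    {G : (Fin k → Fin N) → X → ℝ}
    (hG : ∀ y, (Finset.univ.filter fun a => G a y = 0).card ≤ D)
    {B : Finset (Fin k → ℤ)} {w : (Fin k → ℤ) → X → ℝ}
    (hw : ∀ x, ∃ m ∈ B, w m x ≠ 0) {g : X → ℝ}
    (hg : ∀ y q, q ∈ B → (∀ m ∈ B, w m y ≠ 0 → m = q) →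
      g y = G (blockPos hN q) (T (-blockVec (blockPos hN q)) y)) (L : ℕ) (x : X) :
    ((cube k 0 L).filter fun b => IsGood T B w N (T b x) ∧ g (T b x) = 0).card * N ^ k ≤
      (L + 2 * N) ^ k * D := by
  have hex := fun b (hb : IsGood T B w N (T b x)) => exists_block_of_isGood hadd hN hw hg hb
  choose! c P hdvd hmem hblock using hex
  have hcard : (cube k (-N) (L + N)).card = (L + 2 * N) ^ k := by
    rw [card_cube]; congr 1; omega
  rw [← hcard]
  refine Finset.card_mul_le_card_mul (fun b b' => ∃ a : Fin k → Fin N, b' = c b + blockVec a) ?_ ?_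
  · intro b hb
    obtain ⟨hbL, hgood, -⟩ := Finset.mem_filter.1 hb
    have h1 : (Finset.univ.image fun a : Fin k → Fin N => c b + blockVec a).card = N ^ k := by
      rw [Finset.card_image_of_injective]
      · simp
      · intro a a' haa
        have := add_left_cancel haa
        ext i
        exact_mod_cast congrFun this i
    rw [← h1]
    refine Finset.card_le_card fun b' hb' => ?_
    obtain ⟨a, -, rfl⟩ := Finset.mem_image.1 hb'
    refine Finset.mem_filter.2 ⟨mem_cube.2 fun i => ?_, a, rfl⟩
    obtain ⟨a', ha'⟩ := hmem b hgood
    have h2 := congrFun ha' i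
    have h3 := mem_cube.1 hbL i
    have h4 := (a i).2
    have h5 := (a' i).2
    simp only [Pi.add_apply, blockVec] at h2 ⊢
    omega
  · intro b' _
    by_cases hne : (Finset.bipartiteBelow (fun b b' => ∃ a : Fin k → Fin N, b' = c b + blockVec a)
      ((cube k 0 L).filter fun b => IsGood T B w N (T b x) ∧ g (T b x) = 0) b').Nonempty
    swap
    · rw [Finset.not_nonempty_iff_eq_empty.1 hne]; simp
    obtain ⟨b₁, hb₁⟩ := hne
    obtain ⟨hb₁', a₁, ha₁⟩ := Finset.mem_filter.1 hb₁
    have hgood₁ := (Finset.mem_filter.1 hb₁').2.1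
    refine le_trans ?_ (hG (T (c b₁) x))
    refine le_trans (Finset.card_le_card (t := (Finset.univ.filter
      fun a => G a (T (c b₁) x) = 0).image fun a => c b₁ + blockVec a) ?_) Finset.card_image_le
    intro b hb
    obtain ⟨hb', a, ha⟩ := Finset.mem_filter.1 hb
    obtain ⟨-, hgood, hzero⟩ := Finset.mem_filter.1 hb'
    -- two blocks through `b'` see the same marker, hence lie in the same grid and coincide
    have hPP : P b = P b₁ := by
      obtain ⟨q, hqB, hq⟩ := hw (T b' x)
      have e1 := (hblock b hgood a).1 q hqB (by rwa [← ha])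
      have e2 := (hblock b₁ hgood₁ a₁).1 q hqB (by rwa [← ha₁])
      rw [← e1, ← e2, ← ha, ← ha₁]
    have hcc : c b = c b₁ := by
      ext i
      have d1 := hdvd b hgood i
      have d2 := hdvd b₁ hgood₁ i
      rw [hPP] at d1
      have d3 := dvd_sub d1 d2
      rw [sub_sub_sub_cancel_right] at d3
      have e := congrFun (ha.symm.trans ha₁) i
      simp only [Pi.add_apply, blockVec] at e
      have h4 := (a i).2
      have h5 := (a₁ i).2
      have := Int.eq_zero_of_abs_lt_dvd d3 (by rw [abs_lt]; constructor <;> omega)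
      omega
    obtain ⟨a₂, ha₂⟩ := hmem b hgood
    rw [hcc] at ha₂
    refine Finset.mem_image.2 ⟨a₂, Finset.mem_filter.2 ⟨Finset.mem_univ _, ?_⟩, ha₂.symm⟩
    have := (hblock b hgood a₂).2
    rw [hcc, ← ha₂] at this
    rw [← this, hzero]

open Classical in
/-- The density statement behind the theorem. The function `g` is the average, with the marker
weights, of the block maps `G` placed along the grids anchored at the markers. -/
theorem exists_perturbation {k : ℕ} (hk : 1 ≤ k) {X : Type*} [MetricSpace X] [CompactSpace X]
    {T : (Fin k → ℤ) → X → X} (hT : IsZkAction T) (hmarker : MarkerProperty T)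
    (hmdim : mdim X T = 0) (f : C(X, ℝ)) {η δ : ℝ} (hη : 0 < η) (hδ : 0 < δ) :
    ∃ g : C(X, ℝ), (∀ x, dist (g x) (f x) < η) ∧ ∃ L : ℕ, 1 ≤ L ∧ ∀ x,
      (((cube k 0 L).filter fun b => g (T b x) = 0).card : ℝ) < δ * (L : ℝ) ^ k := by
  obtain ⟨N, D, G, hN, hD, hGc, hGf, hG⟩ := exists_block_map hT hmdim f hη (δ := δ / 4)
    (by positivity)
  obtain ⟨B, w, hwc, hw0, hwpos, hbad⟩ := exists_weights hk hT hmarker hN (δ := δ / 4)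
    (by positivity)
  let H : (Fin k → ℤ) → X → ℝ := fun m y =>
    G (blockPos hN m) (T (-blockVec (blockPos hN m)) y)
  have hHc : ∀ m, Continuous (H m) := fun m => (hGc _).comp (hT.cont _)
  have hHf : ∀ m y, H m y ∈ Metric.ball (f y) η := by
    intro m y
    have := hGf (blockPos hN m) (T (-blockVec (blockPos hN m)) y)
    rw [← hT.map_add, add_neg_cancel, hT.map_zero] at this
    rwa [Metric.mem_ball, Real.dist_eq]
  have hsum : ∀ y, 0 < ∑ m ∈ B, w m y := fun y =>
    let ⟨m, hm, h⟩ := hwpos y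
    Finset.sum_pos' (fun m _ => hw0 m y) ⟨m, hm, h⟩
  let g : C(X, ℝ) := ⟨fun y => B.centerMass (fun m => w m y) (fun m => H m y), by
    unfold Finset.centerMass
    refine Continuous.smul (Continuous.inv₀ ?_ fun y => (hsum y).ne') ?_
    · exact continuous_finsetSum _ fun m _ => hwc m
    · exact continuous_finsetSum _ fun m _ => (hwc m).smul (hHc m)⟩
  have hg : ∀ y q, q ∈ B → (∀ m ∈ B, w m y ≠ 0 → m = q) → g y = H q y := by
    intro y q hq hm
    change B.centerMass (fun m => w m y) (fun m => H m y) = H q y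
    have h1 : ∀ m ∈ B, m ≠ q → w m y = 0 := fun m hmB hne => by
      by_contra h
      exact hne (hm m hmB h)
    have h2 : ∑ m ∈ B, w m y = w q y :=
      Finset.sum_eq_single_of_mem q hq h1
    have h3 : ∑ m ∈ B, w m y • H m y = w q y • H q y :=
      Finset.sum_eq_single_of_mem q hq fun m hmB hne => by rw [h1 m hmB hne, zero_smul]
    have h4 := (hsum y).ne'
    rw [h2] at h4
    rw [Finset.centerMass, h2, h3, smul_smul, inv_mul_cancel₀ h4, one_smul]
  refine ⟨g, fun y => (convex_ball (f y) η).centerMass_mem (fun m _ => hw0 m y) (hsum y)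
    (fun m _ => hHf m y), ?_⟩
  have hlim := (tendsto_ratio_pow k (2 * N)).eventually_lt_const (u := 2) (by norm_num)
  obtain ⟨L, hL1, hL2, hL3⟩ := (hbad.and (hlim.and (eventually_ge_atTop 1))).exists
  refine ⟨L, hL3, fun x => ?_⟩
  have hLk : (0 : ℝ) < (L : ℝ) ^ k := by positivity
  have hNk : (0 : ℝ) < (N : ℝ) ^ k := by positivity
  have h1 := card_good_zeros_mul_le hT.map_add hN hG
    (fun y => (hwpos y).imp fun m h => ⟨h.1, h.2.ne'⟩) hg L x
  have h2 := hL1 x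
  set Z := (cube k 0 L).filter fun b => IsGood T B w N (T b x) ∧ g (T b x) = 0
  set W := (cube k 0 L).filter fun b => ¬ IsGood T B w N (T b x)
  have h3 : (cube k 0 L).filter (fun b => g (T b x) = 0) ⊆ Z ∪ W := by
    intro b hb
    obtain ⟨hbL, hb0⟩ := Finset.mem_filter.1 hb
    by_cases hgood : IsGood T B w N (T b x)
    · exact Finset.mem_union_left _ (Finset.mem_filter.2 ⟨hbL, hgood, hb0⟩)
    · exact Finset.mem_union_right _ (Finset.mem_filter.2 ⟨hbL, hgood⟩)
  have h4 : (((cube k 0 L).filter fun b => g (T b x) = 0).card : ℝ) ≤ Z.card + W.card := by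
    exact_mod_cast (Finset.card_le_card h3).trans (Finset.card_union_le _ _)
  have h5 : (Z.card : ℝ) * (N : ℝ) ^ k ≤ ((L : ℝ) + 2 * N) ^ k * D := by exact_mod_cast h1
  have h6 : ((L : ℝ) + 2 * N) ^ k ≤ 2 * (L : ℝ) ^ k := by
    rw [div_pow, div_lt_iff₀ hLk] at hL2
    exact hL2.le
  have h7 : (Z.card : ℝ) ≤ δ / 2 * (L : ℝ) ^ k := by
    rw [← mul_le_mul_iff_left₀ hNk]
    calc (Z.card : ℝ) * (N : ℝ) ^ k ≤ ((L : ℝ) + 2 * N) ^ k * D := h5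
      _ ≤ (2 * (L : ℝ) ^ k) * (δ / 4 * (N : ℝ) ^ k) := by gcongr
      _ = _ := by ring
  have h8 : 0 < δ * (L : ℝ) ^ k := by positivity
  linarith

/-! ### Orbit capacity -/

/-- The sum in the definition of `ocap` counts zeros in a cube. -/
theorem sum_indicator_eq_card {k : ℕ} {X : Type*} (T : (Fin k → ℤ) → X → X) (f : X → ℝ) (L : ℕ)
    (x : X) : ∑ a : Fin k → Fin L, (f ⁻¹' {0}).indicator (fun _ => (1 : ℝ))
      (T (fun i => (a i : ℤ)) x) = ((cube k 0 L).filter fun b => f (T b x) = 0).card := by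
  classical
  rw [Finset.card_filter]
  push_cast
  refine Finset.sum_bij (fun a _ => blockVec a) ?_ ?_ ?_ ?_
  · intro a _
    refine mem_cube.2 fun i => ?_
    have := (a i).2
    simp only [blockVec]
    omega
  · intro a _ a' _ h
    ext i
    exact_mod_cast congrFun h i
  · intro b hb
    rw [mem_cube] at hb
    refine ⟨fun i => ⟨(b i).toNat, by have := hb i; omega⟩, Finset.mem_univ _, ?_⟩
    ext i
    exact Int.toNat_of_nonneg (hb i).1
  · intro a _
    simp [Set.indicator_apply]

theorem ocap_eq_zero_iff {k : ℕ} {X : Type*} (T : (Fin k → ℤ) → X → X) (f : X → ℝ) :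
    ocap T (f ⁻¹' {0}) = 0 ↔ ∀ j : ℕ, ∃ L : ℕ, 1 ≤ L ∧ ∀ x,
      (((cube k 0 L).filter fun b => f (T b x) = 0).card : ℝ) < 1 / (j + 1) * (L : ℝ) ^ k := by
  unfold ocap
  simp only [sum_indicator_eq_card]
  have : Nonempty {N : ℕ // 1 ≤ N} := ⟨⟨1, le_rfl⟩⟩
  have hnn : ∀ L : {N : ℕ // 1 ≤ N}, 0 ≤ (⨆ x : X,
      (((cube k 0 L.1).filter fun b => f (T b x) = 0).card : ℝ)) / (L.1 : ℝ) ^ k := fun L =>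
    div_nonneg (Real.iSup_nonneg fun x => by positivity) (by positivity)
  constructor
  · intro h j
    obtain ⟨L, hL⟩ := exists_lt_of_ciInf_lt (h.trans_lt (by positivity : (0 : ℝ) < 1 / (j + 1)))
    have hLpos : (0 : ℝ) < (L.1 : ℝ) ^ k := by have := L.2; positivity
    rw [div_lt_iff₀ hLpos] at hL
    refine ⟨L.1, L.2, fun x => lt_of_le_of_lt ?_ hL⟩
    refine le_ciSup (f := fun x => (((cube k 0 L.1).filter fun b => f (T b x) = 0).card : ℝ)) ?_ x
    refine ⟨(cube k 0 L.1).card, ?_⟩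
    rintro _ ⟨y, rfl⟩
    exact Nat.cast_le.2 (Finset.card_filter_le _ _)
  · intro h
    refine le_antisymm (le_of_forall_pos_le_add fun ε hε => ?_) (Real.iInf_nonneg hnn)
    obtain ⟨j, hj⟩ := exists_nat_one_div_lt hε
    obtain ⟨L, hL1, hL⟩ := h j
    have hLpos : (0 : ℝ) < (L : ℝ) ^ k := by positivity
    refine (ciInf_le ⟨0, by rintro _ ⟨L, rfl⟩; exact hnn L⟩ ⟨L, hL1⟩).trans ?_
    rw [zero_add, div_le_iff₀ hLpos]
    refine Real.iSup_le (fun x => (hL x).le.trans ?_) (by positivity)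
    gcongr

theorem isOpen_setOf_card_lt {k : ℕ} {X : Type*} [TopologicalSpace X] [CompactSpace X]
    {T : (Fin k → ℤ) → X → X} (hT : IsZkAction T) (L : ℕ) (u : ℝ) :
    IsOpen {f : C(X, ℝ) | ∀ x,
      (((cube k 0 L).filter fun b => f (T b x) = 0).card : ℝ) < u} := by
  rw [isOpen_iff_eventually]
  intro f hf
  have := (isCompact_univ (X := X)).eventually_forall_of_forall_eventually (x₀ := f)
    (P := fun f x => (((cube k 0 L).filter fun b => f (T b x) = 0).card : ℝ) < u) ?_
  · filter_upwards [this] with g hg x using hg x (mem_univ x)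
  · intro x _
    have h1 : ∀ᶠ z : C(X, ℝ) × X in 𝓝 (f, x), ∀ b ∈ cube k 0 L,
        f (T b x) ≠ 0 → z.1 (T b z.2) ≠ 0 := by
      rw [Filter.eventually_all_finset]
      intro b _
      by_cases hb : f (T b x) = 0
      · simp [hb]
      · have hc : Continuous fun z : C(X, ℝ) × X => z.1 (T b z.2) :=
          continuous_fst.eval ((hT.cont b).comp continuous_snd)
        filter_upwards [hc.continuousAt.eventually_ne hb] with z hz _ using hz
    filter_upwards [h1] with z hz
    refine lt_of_le_of_lt ?_ (hf x)
    have : (cube k 0 L).filter (fun b => z.1 (T b z.2) = 0) ⊆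
        (cube k 0 L).filter fun b => f (T b x) = 0 := by
      intro b hb
      obtain ⟨hbL, hb0⟩ := Finset.mem_filter.1 hb
      refine Finset.mem_filter.2 ⟨hbL, ?_⟩
      by_contra hne
      exact hz b hbL hne hb0
    exact_mod_cast Finset.card_le_card this

/-- **Theorem.** If a `ℤ^k`-system has the marker property and `mdim(X) = 0`,
then `{f ∈ C(X,ℝ) : ocap(f⁻¹(0)) = 0}` is a dense `G_δ` subset of `C(X,ℝ)`. -/
theorem stmt_11 (k : ℕ) (hk : 1 ≤ k)
    (X : Type*) [MetricSpace X] [CompactSpace X]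
    (T : (Fin k → ℤ) → X → X) (hT : IsZkAction T) (hmarker : MarkerProperty T)
    (hmdim : mdim X T = 0) :
    Dense {f : C(X, ℝ) | ocap T ((f : X → ℝ) ⁻¹' {0}) = 0} ∧
    IsGδ {f : C(X, ℝ) | ocap T ((f : X → ℝ) ⁻¹' {0}) = 0} := by
  -- `ocap` is an infimum over cubes, so it vanishes iff for every `j` one cube suffices
  let V : ℕ → Set C(X, ℝ) := fun j => {f | ∃ L : ℕ, 1 ≤ L ∧ ∀ x,
    (((cube k 0 L).filter fun b => f (T b x) = 0).card : ℝ) < 1 / (j + 1) * (L : ℝ) ^ k}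
  have hV : {f : C(X, ℝ) | ocap T ((f : X → ℝ) ⁻¹' {0}) = 0} = ⋂ j, V j := by
    ext f
    rw [mem_iInter]
    exact ocap_eq_zero_iff T f
  have hopen : ∀ j, IsOpen (V j) := by
    intro j
    have : V j = ⋃ (L : ℕ) (_ : 1 ≤ L), {f : C(X, ℝ) | ∀ x,
        (((cube k 0 L).filter fun b => f (T b x) = 0).card : ℝ) <
          1 / (j + 1) * (L : ℝ) ^ k} := by
      ext f
      simp [V]
    rw [this]
    exact isOpen_biUnion fun L _ => isOpen_setOf_card_lt hT L _
  have hdense : ∀ j, Dense (V j) := by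
    intro j
    rw [Metric.dense_iff]
    intro f η hη
    obtain ⟨g, hgf, L, hL, hgL⟩ := exists_perturbation hk hT hmarker hmdim f (half_pos hη)
      (δ := 1 / (j + 1)) (by positivity)
    refine ⟨g, ?_, L, hL, fun x => ?_⟩
    · rw [Metric.mem_ball]
      exact ((ContinuousMap.dist_le (half_pos hη).le).2 fun x => (hgf x).le).trans_lt
        (half_lt_self hη)
    · convert hgL x
  rw [hV]
  exact ⟨dense_iInter_of_isOpen hopen hdense, .iInter fun j => (hopen j).isGδ⟩
end
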